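/- arXiv:0909.4865 — 5 statements merged into one kernel-verified Lean document; each statement's English description precedes it below -/
import Mathlib

section
/- Let f be a real binary form of degree d with 3 ≤ d ≤ 5 and with distinct roots (squarefree over ℂ). If for every (a,b) ≠ (0,0) the real binary form a·∂f/∂x + b·∂f/∂y of degree d−1 has d−1 distinct real roots, then f has d distinct real roots. -/
open MvPolynomial

noncomputable section

/-- The real linear binary form `a·x + b·y`. -/
def lin (a b : ℝ) : MvPolynomial (Fin 2) ℝ := C a * X 0 + C b * X 1

/-- `f` is a sum of `r` terms `cⱼ · ℓⱼ^d` with `ℓⱼ` nonzero real linear forms. -/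
def HasDecomp (f : MvPolynomial (Fin 2) ℝ) (d r : ℕ) : Prop :=
  ∃ c a b : Fin r → ℝ, (∀ j, (a j, b j) ≠ (0, 0)) ∧
    f = ∑ j, C (c j) * lin (a j) (b j) ^ d

/-- The real (symmetric) rank of a binary form of degree `d`:
the least number of `d`-th powers of real linear forms needed to write `f`. -/
def realRank (f : MvPolynomial (Fin 2) ℝ) (d : ℕ) : ℕ :=
  sInf {r | HasDecomp f d r}

/-- The set of real projective roots of a binary form. -/
def projRoots (f : MvPolynomial (Fin 2) ℝ) : Set (Projectivization ℝ (Fin 2 → ℝ)) :=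
  {p | eval p.rep f = 0}

/-- `f` is a product of `d` pairwise non-proportional real linear forms,
i.e. `f` has `d` distinct real roots. -/
def SplitsDistinct (f : MvPolynomial (Fin 2) ℝ) (d : ℕ) : Prop :=
  ∃ a b : Fin d → ℝ, (∀ j, (a j, b j) ≠ (0, 0)) ∧
    (∀ i j, i ≠ j → a i * b j ≠ a j * b i) ∧
    f = ∏ j, lin (a j) (b j)

/-- `f` has distinct roots, i.e. it is squarefree as a complex polynomial. -/
def SquarefreeC (f : MvPolynomial (Fin 2) ℝ) : Prop :=
  Squarefree (MvPolynomial.map (algebraMap ℝ ℂ) f)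

/-- The linear change of variables of `f` by the matrix `A`: `f(A(x,y))`. -/
def subst (A : Matrix (Fin 2) (Fin 2) ℝ) (f : MvPolynomial (Fin 2) ℝ) :
    MvPolynomial (Fin 2) ℝ :=
  aeval (fun i => C (A i 0) * X 0 + C (A i 1) * X 1) f

/-- The complex rank of a real binary form of degree `d`. -/
def complexRank (f : MvPolynomial (Fin 2) ℝ) (d : ℕ) : ℕ :=
  sInf {r | ∃ a b : Fin r → ℂ, (∀ j, (a j, b j) ≠ (0, 0)) ∧
    MvPolynomial.map (algebraMap ℝ ℂ) f = ∑ j, (C (a j) * X 0 + C (b j) * X 1) ^ d}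

/-! ### Univariate part -/

theorem aux_min (g : Polynomial ℝ)
    (hcrit : ∀ m, g.derivative.eval m = 0 → g.eval m * g.derivative.derivative.eval m < 0)
    (a b : ℝ) (hab : a < b)
    (ha : g.derivative.eval a = 0 ∨ g.eval b < g.eval a)
    (hb : g.derivative.eval b = 0 ∨ g.eval a < g.eval b)
    (hpos : ∀ t ∈ Set.Icc a b, 0 < g.eval t) : False := by
  obtain ⟨m, hm, hmin⟩ := isCompact_Icc.exists_isMinOn (Set.nonempty_Icc.2 hab.le)
    (g.continuous.continuousOn (s := Set.Icc a b))
  have hmin' : ∀ t ∈ Set.Icc a b, g.eval m ≤ g.eval t := fun t ht => hmin ht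
  have hd : g.derivative.eval m = 0 := by
    rcases eq_or_lt_of_le hm.1 with h | h
    · subst h
      rcases ha with h | h
      · exact h
      · exact absurd (hmin' b ⟨hab.le, le_rfl⟩) (not_le.2 h)
    rcases eq_or_lt_of_le hm.2 with h' | h'
    · subst h'
      rcases hb with h | h
      · exact h
      · exact absurd (hmin' a ⟨le_rfl, hab.le⟩) (not_le.2 h)
    have : IsLocalMin (fun t => g.eval t) m := hmin.isLocalMin (Icc_mem_nhds h h')
    simpa using this.deriv_eq_zero
  have h2 : g.derivative.derivative.eval m < 0 := by
    have := hcrit m hd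
    have := hpos m hm
    nlinarith
  have hmax : IsLocalMax (fun t => g.eval t) m := by
    apply isLocalMax_of_deriv_deriv_neg
    · have : deriv (fun t => g.eval t) = fun t => g.derivative.eval t := by
        ext t; simp
      rw [this]; simpa using h2
    · simpa using hd
    · exact g.continuous.continuousAt
  obtain ⟨l, u, hlu, hsub⟩ := mem_nhds_iff_exists_Ioo_subset.1 hmax
  have hinf : Set.Infinite {x | g.eval x = (Polynomial.C (g.eval m)).eval x} := by
    have hlt : max l a < min u b := by
      rcases hm with ⟨h1, h2⟩
      rcases hlu with ⟨h3, h4⟩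
      rw [max_lt_iff, lt_min_iff, lt_min_iff]
      refine ⟨⟨by linarith, by linarith⟩, by linarith, hab⟩
    refine (Set.Ioo_infinite hlt).mono ?_
    rintro x ⟨hx1, hx2⟩
    rw [max_lt_iff] at hx1
    rw [lt_min_iff] at hx2
    have h3 : g.eval x ≤ g.eval m := hsub ⟨hx1.1, hx2.1⟩
    have h4 := hmin' x ⟨hx1.2.le, hx2.2.le⟩
    simp only [Set.mem_ofPred_eq, Polynomial.eval_C]
    linarith
  have := Polynomial.eq_of_infinite_eval_eq _ _ hinf
  rw [this] at h2
  simp at h2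

theorem aux_root (g : Polynomial ℝ)
    (hcrit : ∀ m, g.derivative.eval m = 0 → g.eval m * g.derivative.derivative.eval m < 0)
    (a b : ℝ) (hab : a < b)
    (ha : g.derivative.eval a = 0 ∨ |g.eval b| < |g.eval a|)
    (hb : g.derivative.eval b = 0 ∨ |g.eval a| < |g.eval b|) :
    ∃ t ∈ Set.Icc a b, g.eval t = 0 := by
  by_contra hno
  push Not at hno
  have hconn : IsPreconnected (Set.Icc a b) := isPreconnected_Icc
  have hsgn : (∀ t ∈ Set.Icc a b, 0 < g.eval t) ∨ (∀ t ∈ Set.Icc a b, g.eval t < 0) := by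
    by_contra hcon
    push Not at hcon
    obtain ⟨⟨s, hs, hs'⟩, t, ht, ht'⟩ := hcon
    obtain ⟨x, hx, hx'⟩ := hconn.intermediate_value hs ht (g.continuous.continuousOn) ⟨hs', ht'⟩
    exact hno x hx hx'
  have hA : a ∈ Set.Icc a b := ⟨le_rfl, hab.le⟩
  have hB : b ∈ Set.Icc a b := ⟨hab.le, le_rfl⟩
  rcases hsgn with h | h
  · rw [abs_of_pos (h a hA), abs_of_pos (h b hB)] at ha hb
    exact aux_min g hcrit a b hab ha hb h
  · rw [abs_of_neg (h a hA), abs_of_neg (h b hB)] at ha hb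
    refine aux_min (-g) ?_ a b hab ?_ ?_ ?_
    · intro m hm
      have := hcrit m (by simpa using hm)
      simpa using this
    · simpa using ha
    · simpa using hb
    · intro t ht
      simpa using h t ht

theorem aux_count (g : Polynomial ℝ) (hdeg : 0 < g.degree)
    (hcrit : ∀ m, g.derivative.eval m = 0 → g.eval m * g.derivative.derivative.eval m < 0)
    (hne : g.derivative.roots.toFinset.Nonempty) :
    g.derivative.roots.toFinset.card + 1 ≤ g.roots.toFinset.card := by
  classical
  have hg0 : g ≠ 0 := by rintro rfl; simp at hdeg
  have hmem : ∀ t, t ∈ g.roots.toFinset ↔ g.eval t = 0 := by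
    intro t; simp [hg0]
  have hmem' : ∀ t, t ∈ g.derivative.roots.toFinset → g.derivative.eval t = 0 := by
    intro t ht; simp at ht; exact ht.2
  have hgc : ∀ c, g.derivative.eval c = 0 → g.eval c ≠ 0 := by
    intro c hc h0
    have := hcrit c hc
    rw [h0] at this; simp at this
  have hR : ∀ c, g.derivative.eval c = 0 → ∃ t, c < t ∧ g.eval t = 0 := by
    intro c hc
    have h1 := (g.abs_tendsto_atTop hdeg).eventually_gt_atTop (|g.eval c|)
    obtain ⟨b, hb, hcb⟩ := (h1.and (Filter.eventually_gt_atTop c)).exists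
    obtain ⟨t, ht, ht0⟩ := aux_root g hcrit c b hcb (Or.inl hc) (Or.inr hb)
    refine ⟨t, lt_of_le_of_ne ht.1 ?_, ht0⟩
    rintro rfl
    exact hgc _ hc ht0
  have hL : ∀ c, g.derivative.eval c = 0 → ∃ t, t < c ∧ g.eval t = 0 := by
    intro c hc
    have h1 := (g.abs_tendsto_atBot hdeg).eventually_gt_atTop (|g.eval c|)
    obtain ⟨b, hb, hcb⟩ := (h1.and (Filter.eventually_lt_atBot c)).exists
    obtain ⟨t, ht, ht0⟩ := aux_root g hcrit b c hcb (Or.inr hb) (Or.inl hc)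
    refine ⟨t, lt_of_le_of_ne ht.2 ?_, ht0⟩
    rintro rfl
    exact hgc _ hc ht0
  have hex : ∀ c, g.derivative.eval c = 0 → ∃ r, r < c ∧ g.eval r = 0 ∧
      ∀ s, s < c → g.eval s = 0 → s ≤ r := by
    intro c hc
    obtain ⟨t, ht, ht0⟩ := hL c hc
    have hne : (g.roots.toFinset.filter (· < c)).Nonempty := ⟨t, by
      rw [Finset.mem_filter, hmem]; exact ⟨ht0, ht⟩⟩
    have := Finset.max'_mem _ hne
    rw [Finset.mem_filter, hmem] at this
    refine ⟨_, this.2, this.1, ?_⟩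
    intro s hs hs0
    exact Finset.le_max' _ _ (by rw [Finset.mem_filter, hmem]; exact ⟨hs0, hs⟩)
  choose! φ h1 h2 h3 using hex
  obtain ⟨c0, hc0⟩ := hne
  obtain ⟨t0, _, ht0⟩ := hR c0 (hmem' _ hc0)
  have hne : g.roots.toFinset.Nonempty := ⟨t0, (hmem _).2 ht0⟩
  set M := g.roots.toFinset.max' hne with hM
  have hMm : M ∈ g.roots.toFinset := Finset.max'_mem _ _
  rw [← Finset.card_erase_add_one hMm]
  apply Nat.add_le_add_right
  apply Finset.card_le_card_of_injOn φ
  · intro c hc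
    have hc' := hmem' c hc
    rw [Finset.mem_coe, Finset.mem_erase, hmem]
    refine ⟨?_, h2 c hc'⟩
    obtain ⟨t, ht, ht0⟩ := hR c hc'
    have : t ≤ M := Finset.le_max' _ _ ((hmem _).2 ht0)
    have := h1 c hc'
    exact ne_of_lt (by linarith)
  · have key : ∀ c c', g.derivative.eval c = 0 → g.derivative.eval c' = 0 → c < c' →
        φ c < φ c' := by
      intro c c' hc hc' hlt
      obtain ⟨t, ht, ht0⟩ := aux_root g hcrit c c' hlt (Or.inl hc) (Or.inl hc')
      have hne' : t ≠ c' := by rintro rfl; exact hgc _ hc' ht0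
      have := h3 c' hc' t (lt_of_le_of_ne ht.2 hne') ht0
      have := h1 c hc
      linarith [ht.1]
    intro c hc c' hc' he
    rcases lt_trichotomy c c' with h | h | h
    · exact absurd he (ne_of_lt (key _ _ (hmem' _ hc) (hmem' _ hc') h))
    · exact h
    · exact absurd he.symm (ne_of_lt (key _ _ (hmem' _ hc') (hmem' _ hc) h))

/-! ### Restriction of a form to an affine line -/

/-- Restriction of a form to the line `w + t v`. -/
def ln (v w : Fin 2 → ℝ) (F : MvPolynomial (Fin 2) ℝ) : Polynomial ℝ :=
  aeval (fun i => Polynomial.C (v i) * Polynomial.X + Polynomial.C (w i)) F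

theorem ln_eval (v w : Fin 2 → ℝ) (F : MvPolynomial (Fin 2) ℝ) (t : ℝ) :
    (ln v w F).eval t = eval (t • v + w) F := by
  unfold ln
  induction F using MvPolynomial.induction_on with
  | C a => simp
  | add p q hp hq => simp [hp, hq]
  | mul_X p i hp => simp [hp]; left; ring

theorem ln_deriv (v w : Fin 2 → ℝ) (F : MvPolynomial (Fin 2) ℝ) :
    (ln v w F).derivative = ln v w (C (v 0) * pderiv 0 F + C (v 1) * pderiv 1 F) := by
  unfold ln
  induction F using MvPolynomial.induction_on with
  | C a => simp
  | add p q hp hq => simp only [map_add, hp, hq]; simp; ring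
  | mul_X p i hp =>
    rw [map_mul, Polynomial.derivative_mul, hp]
    fin_cases i <;> simp [Polynomial.algebraMap_eq] <;> ring

theorem ln_euler (v w : Fin 2 → ℝ) (F : MvPolynomial (Fin 2) ℝ) (d : ℕ)
    (hF : F.IsHomogeneous d) (α β : ℝ) :
    ln v w (C (α * v 0 + β * w 0) * pderiv 0 F + C (α * v 1 + β * w 1) * pderiv 1 F) =
      (Polynomial.C α - Polynomial.C β * Polynomial.X) * (ln v w F).derivative
        + Polynomial.C (β * d) * ln v w F := by
  rw [ln_deriv]
  have h := congrArg (ln v w) hF.sum_X_mul_pderiv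
  unfold ln at *
  simp [Polynomial.algebraMap_eq] at h ⊢
  linear_combination (Polynomial.C β) * h

theorem deg_eq {n : ℕ} {F : MvPolynomial (Fin 2) ℝ} (hF : F.IsHomogeneous n)
    {m : Fin 2 →₀ ℕ} (hm : m ∈ F.support) : m 0 + m 1 = n := by
  have := hF (mem_support_iff.1 hm)
  rw [Finsupp.weight_apply, Finsupp.sum_fintype _ _ (by simp)] at this
  simpa [Fin.sum_univ_two] using this

theorem ln_coeff (v w : Fin 2 → ℝ) (F : MvPolynomial (Fin 2) ℝ) (n : ℕ)
    (hF : F.IsHomogeneous n) :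
    (ln v w F).natDegree ≤ n ∧ (ln v w F).coeff n = eval v F := by
  have hl : ∀ i, (Polynomial.C (v i) * Polynomial.X + Polynomial.C (w i)).natDegree ≤ 1 :=
    fun i => Polynomial.natDegree_linear_le
  have hp : ∀ i (k : ℕ), ((Polynomial.C (v i) * Polynomial.X + Polynomial.C (w i)) ^ k).natDegree
      ≤ k := fun i k => by
    simpa using Polynomial.natDegree_pow_le_of_le k (hl i)
  have hc : ∀ i (k : ℕ), ((Polynomial.C (v i) * Polynomial.X + Polynomial.C (w i)) ^ k).coeff k
      = v i ^ k := fun i k => by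
    have := Polynomial.coeff_pow_of_natDegree_le (m := k) (hl i)
    simpa using this
  have hsum : ln v w F = ∑ m ∈ F.support, Polynomial.C (coeff m F) *
      ((Polynomial.C (v 0) * Polynomial.X + Polynomial.C (w 0)) ^ (m 0) *
      (Polynomial.C (v 1) * Polynomial.X + Polynomial.C (w 1)) ^ (m 1)) := by
    unfold ln
    rw [aeval_def, eval₂_eq']
    simp [Fin.prod_univ_two, Polynomial.algebraMap_eq]
  constructor
  · rw [hsum]
    apply Polynomial.natDegree_sum_le_of_forall_le
    intro m hm
    refine (Polynomial.natDegree_C_mul_le _ _).trans ?_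
    refine Polynomial.natDegree_mul_le.trans ?_
    rw [← deg_eq hF hm]
    exact add_le_add (hp _ _) (hp _ _)
  · rw [hsum, Polynomial.finsetSum_coeff, eval_eq']
    apply Finset.sum_congr rfl
    intro m hm
    rw [Polynomial.coeff_C_mul, Fin.prod_univ_two, ← deg_eq hF hm,
      Polynomial.coeff_mul_add_eq_of_natDegree_le (hp _ _) (hp _ _), hc, hc]

theorem eval_smul_hom {n : ℕ} {F : MvPolynomial (Fin 2) ℝ} (hF : F.IsHomogeneous n)
    (c : ℝ) (x : Fin 2 → ℝ) : eval (c • x) F = c ^ n * eval x F := by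
  rw [eval_eq', eval_eq', Finset.mul_sum]
  apply Finset.sum_congr rfl
  intro m hm
  rw [← deg_eq hF hm]
  simp [Fin.prod_univ_two]
  ring

theorem mem_projRoots_mk {n : ℕ} {F : MvPolynomial (Fin 2) ℝ} (hF : F.IsHomogeneous n)
    (x : Fin 2 → ℝ) (hx : x ≠ 0) :
    Projectivization.mk ℝ x hx ∈ projRoots F ↔ eval x F = 0 := by
  obtain ⟨a, ha⟩ := Projectivization.exists_smul_eq_mk_rep ℝ x hx
  show eval _ F = 0 ↔ _
  rw [← ha, Units.smul_def, eval_smul_hom hF]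
  simp

/-! ### Counting -/

theorem v_ne (v w : Fin 2 → ℝ) (hvw : v 0 * w 1 - v 1 * w 0 ≠ 0) : v ≠ 0 := by
  rintro rfl; simp at hvw

theorem pt_ne (v w : Fin 2 → ℝ) (hvw : v 0 * w 1 - v 1 * w 0 ≠ 0) (t : ℝ) : t • v + w ≠ 0 := by
  intro h
  have h0 := congrFun h 0
  have h1 := congrFun h 1
  simp at h0 h1
  apply hvw
  linear_combination (v 0) * h1 - v 1 * h0

/-- The point of the projective line on the affine line. -/
def pt (v w : Fin 2 → ℝ) (hvw : v 0 * w 1 - v 1 * w 0 ≠ 0) (t : ℝ) : Projectivization ℝ (Fin 2 → ℝ) :=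
  Projectivization.mk ℝ (t • v + w) (pt_ne v w hvw t)

theorem pt_inj (v w : Fin 2 → ℝ) (hvw : v 0 * w 1 - v 1 * w 0 ≠ 0) : Function.Injective (pt v w hvw) := by
  intro s t h
  unfold pt at h
  rw [Projectivization.mk_eq_mk_iff'] at h
  obtain ⟨a, ha⟩ := h
  have h0 := congrFun ha 0
  have h1 := congrFun ha 1
  simp at h0 h1
  have e1 : a = 1 := by
    have : (a - 1) * (v 0 * w 1 - v 1 * w 0) = 0 := by
      linear_combination v 0 * h1 - v 1 * h0
    rcases mul_eq_zero.1 this with h | h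
    · linarith
    · exact absurd h hvw
  subst e1
  have : (t - s) * (v 0 * w 1 - v 1 * w 0) = 0 := by
    linear_combination w 1 * h0 - w 0 * h1
  rcases mul_eq_zero.1 this with h | h
  · linarith
  · exact absurd h hvw

theorem pt_cover (v w : Fin 2 → ℝ) (hvw : v 0 * w 1 - v 1 * w 0 ≠ 0) (p : Projectivization ℝ (Fin 2 → ℝ)) :
    p = Projectivization.mk ℝ v (v_ne v w hvw) ∨ ∃ t, p = pt v w hvw t := by
  induction p using Projectivization.ind with
  | h x hx =>
    by_cases hb : v 0 * x 1 - v 1 * x 0 = 0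
    · left
      rw [Projectivization.mk_eq_mk_iff']
      refine ⟨(x 0 * w 1 - x 1 * w 0) / (v 0 * w 1 - v 1 * w 0), ?_⟩
      ext i
      fin_cases i
      · simp only [Fin.zero_eta, Pi.smul_apply, smul_eq_mul]
        rw [div_mul_eq_mul_div, div_eq_iff hvw]
        linear_combination (-w 0) * hb
      · simp only [Fin.mk_one, Pi.smul_apply, smul_eq_mul]
        rw [div_mul_eq_mul_div, div_eq_iff hvw]
        linear_combination (-w 1) * hb
    · right
      refine ⟨(x 0 * w 1 - x 1 * w 0) / (v 0 * x 1 - v 1 * x 0), ?_⟩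
      unfold pt
      rw [Projectivization.mk_eq_mk_iff']
      refine ⟨(v 0 * x 1 - v 1 * x 0) / (v 0 * w 1 - v 1 * w 0), ?_⟩
      ext i
      fin_cases i <;> simp <;> field_simp <;> ring

theorem pt_mem (v w : Fin 2 → ℝ) (hvw : v 0 * w 1 - v 1 * w 0 ≠ 0) {n : ℕ} {F : MvPolynomial (Fin 2) ℝ} (hF : F.IsHomogeneous n) (t : ℝ) :
    pt v w hvw t ∈ projRoots F ↔ (ln v w F).eval t = 0 := by
  unfold pt
  rw [mem_projRoots_mk hF, ln_eval]

theorem count_zero (v w : Fin 2 → ℝ) (hvw : v 0 * w 1 - v 1 * w 0 ≠ 0) {n : ℕ} {F : MvPolynomial (Fin 2) ℝ} (hF : F.IsHomogeneous n)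
    (h : ln v w F = 0) : (projRoots F).ncard = 0 := by
  apply Set.Infinite.ncard
  refine (Set.infinite_range_of_injective (pt_inj v w hvw)).mono ?_
  rintro _ ⟨t, rfl⟩
  rw [pt_mem v w hvw hF, h]; simp

theorem roots_eq (v w : Fin 2 → ℝ) (hvw : v 0 * w 1 - v 1 * w 0 ≠ 0) {n : ℕ} {F : MvPolynomial (Fin 2) ℝ} (hF : F.IsHomogeneous n)
    (h : ln v w F ≠ 0) : projRoots F ⊆
      insert (Projectivization.mk ℝ v (v_ne v w hvw))
        (pt v w hvw '' (ln v w F).roots.toFinset) := by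
  intro p hp
  rcases pt_cover v w hvw p with rfl | ⟨t, rfl⟩
  · exact Set.mem_insert _ _
  · right
    rw [pt_mem v w hvw hF] at hp
    exact ⟨t, by simp [h, hp], rfl⟩

theorem count_le (v w : Fin 2 → ℝ) (hvw : v 0 * w 1 - v 1 * w 0 ≠ 0) {n : ℕ} {F : MvPolynomial (Fin 2) ℝ} (hF : F.IsHomogeneous n)
    (h : ln v w F ≠ 0) : (projRoots F).ncard ≤ (ln v w F).roots.toFinset.card + 1 := by
  refine (Set.ncard_le_ncard (roots_eq v w hvw hF h) (((Finset.finite_toSet _).image _).insert _)).trans ?_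
  refine (Set.ncard_insert_le _ _).trans ?_
  rw [Set.ncard_image_of_injective _ (pt_inj v w hvw), Set.ncard_coe_finset]

theorem count_eq (v w : Fin 2 → ℝ) (hvw : v 0 * w 1 - v 1 * w 0 ≠ 0) {n : ℕ} {F : MvPolynomial (Fin 2) ℝ} (hF : F.IsHomogeneous n)
    (h : eval v F ≠ 0) : (projRoots F).ncard = (ln v w F).roots.toFinset.card := by
  have h0 : ln v w F ≠ 0 := by
    intro h0
    have := (ln_coeff v w F n hF).2
    rw [h0] at this
    exact h this.symm
  have : projRoots F = pt v w hvw '' (ln v w F).roots.toFinset := by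
    apply Set.Subset.antisymm
    · intro p hp
      rcases roots_eq v w hvw hF h0 hp with rfl | h'
      · exact absurd ((mem_projRoots_mk hF _ _).1 hp) h
      · exact h'
    · rintro _ ⟨t, ht, rfl⟩
      rw [pt_mem v w hvw hF]
      simp at ht
      exact ht.2
  rw [this, Set.ncard_image_of_injective _ (pt_inj v w hvw), Set.ncard_coe_finset]

theorem card_double (q : Polynomial ℝ) (hq : q ≠ 0) (t : ℝ) (h0 : q.eval t = 0)
    (h1 : q.derivative.eval t = 0) : q.roots.toFinset.card + 1 ≤ q.natDegree := by
  have hm : 1 < q.roots.count t := by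
    rw [Polynomial.count_roots, Polynomial.one_lt_rootMultiplicity_iff_isRoot hq]
    exact ⟨h0, h1⟩
  have hle : q.roots.dedup ≤ q.roots.erase t := by
    rw [Multiset.le_iff_subset (Multiset.nodup_dedup _)]
    intro s hs
    rw [Multiset.mem_dedup] at hs
    by_cases hst : s = t
    · subst hst
      rw [← Multiset.count_pos, Multiset.count_erase_self]; omega
    · exact (Multiset.mem_erase_of_ne hst).2 hs
  have h2 := Multiset.card_le_card hle
  have hmem : t ∈ q.roots := by rw [← Multiset.count_pos]; omega
  have h3 := Multiset.card_erase_add_one hmem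
  have h4 := q.card_roots'
  have : q.roots.toFinset.card = Multiset.card q.roots.dedup := rfl
  omega

theorem count_double (v w : Fin 2 → ℝ) (hvw : v 0 * w 1 - v 1 * w 0 ≠ 0) {n : ℕ} {F : MvPolynomial (Fin 2) ℝ} (hF : F.IsHomogeneous n)
    (hn : 0 < n) (t : ℝ) (h0 : (ln v w F).eval t = 0)
    (h1 : (ln v w F).derivative.eval t = 0) : (projRoots F).ncard < n := by
  by_cases hz : ln v w F = 0
  · rw [count_zero v w hvw hF hz]; exact hn
  have hc := card_double _ hz t h0 h1
  have hl := ln_coeff v w F n hF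
  by_cases hv : eval v F = 0
  · have h2 : (ln v w F).natDegree ≠ n := by
      intro he
      have := hl.2
      rw [hv, ← he] at this
      exact hz (Polynomial.leadingCoeff_eq_zero.1 this)
    have := count_le v w hvw hF hz
    omega
  · have := count_eq v w hvw hF hv
    omega


theorem pol_hom {d : ℕ} {f : MvPolynomial (Fin 2) ℝ} (hf : f.IsHomogeneous d) (a b : ℝ) :
    (C a * pderiv 0 f + C b * pderiv 1 f).IsHomogeneous (d - 1) := by
  refine IsHomogeneous.add ?_ ?_
  · simpa using (isHomogeneous_C (Fin 2) a).mul (hf.pderiv (i := 0))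
  · simpa using (isHomogeneous_C (Fin 2) b).mul (hf.pderiv (i := 1))

theorem main_aux (d : ℕ) (hd3 : 3 ≤ d) (f : MvPolynomial (Fin 2) ℝ)
    (hf : f.IsHomogeneous d) (hf0 : f ≠ 0)
    (hpolar : ∀ a b : ℝ, (a, b) ≠ (0, 0) →
      (projRoots (C a * pderiv 0 f + C b * pderiv 1 f)).ncard = d - 1) :
    (projRoots f).ncard = d := by
  obtain ⟨v, hv⟩ : ∃ v, eval v f ≠ 0 := by
    by_contra h
    push Not at h
    exact hf0 (MvPolynomial.funext (by simpa using h))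
  have hv0 : v ≠ 0 := by
    rintro rfl
    have := eval_smul_hom hf 0 0
    rw [zero_smul, zero_pow (by omega), zero_mul] at this
    exact hv this
  obtain ⟨w, hvw⟩ : ∃ w : Fin 2 → ℝ, v 0 * w 1 - v 1 * w 0 ≠ 0 := by
    refine ⟨![-v 1, v 0], ?_⟩
    simp
    intro h
    apply hv0
    have a0 : v 0 = 0 := by nlinarith [sq_nonneg (v 0), sq_nonneg (v 1)]
    have a1 : v 1 = 0 := by nlinarith [sq_nonneg (v 0), sq_nonneg (v 1)]
    ext i; fin_cases i
    · exact a0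
    · exact a1
  set g := ln v w f with hg
  have hco := ln_coeff v w f d hf
  have hdeg : g.natDegree = d :=
    le_antisymm hco.1 (Polynomial.le_natDegree_of_ne_zero (by rw [hco.2]; exact hv))
  have hdR : (3 : ℝ) ≤ d := by exact_mod_cast hd3
  -- no double roots for polars
  have hnd : ∀ α β t : ℝ, (α, β) ≠ (0, 0) →
      (α - β * t) * g.derivative.eval t + β * d * g.eval t = 0 →
      (α - β * t) * g.derivative.derivative.eval t + β * (d - 1) * g.derivative.eval t ≠ 0 := by
    intro α β t hne h0 h1
    have hl := ln_euler v w f d hf α β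
    have hlt := count_double v w hvw (pol_hom hf (α * v 0 + β * w 0) (α * v 1 + β * w 1))
      (by omega) t (by rw [hl]; simpa using h0) (by
        rw [hl]; simp; linear_combination h1)
    rw [hpolar] at hlt
    · omega
    · intro he
      rw [Prod.mk.injEq] at he
      apply hne
      have e1 : α * (v 0 * w 1 - v 1 * w 0) = 0 := by
        linear_combination w 1 * he.1 - w 0 * he.2
      have e2 : β * (v 0 * w 1 - v 1 * w 0) = 0 := by
        linear_combination v 0 * he.2 - v 1 * he.1
      rw [Prod.mk.injEq]
      exact ⟨(mul_eq_zero.1 e1).resolve_right hvw, (mul_eq_zero.1 e2).resolve_right hvw⟩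
  -- critical points
  have hcrit_card : g.derivative.roots.toFinset.card = d - 1 := by
    have hp := hpolar (v 0) (v 1) (by
      intro he; rw [Prod.mk.injEq] at he; apply hv0; ext i; fin_cases i
      · exact he.1
      · exact he.2)
    rw [hg, ln_deriv, ← hp]
    symm
    apply count_eq v w hvw (pol_hom hf _ _)
    have := congrArg (eval v) hf.sum_X_mul_pderiv
    simp at this ⊢
    rw [this]
    exact mul_ne_zero (by positivity) hv
  -- the Hessian
  have hH : ∀ t, (d - 1) * g.derivative.eval t ^ 2 - d * g.eval t * g.derivative.derivative.eval t
      ≠ 0 := by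
    intro t h
    by_cases hc : g.derivative.eval t = 0
    · have h2 := hnd 1 0 t (by simp) (by simp [hc])
      have h3 := hnd t 1 t (by simp)
      have hg0 : g.eval t = 0 := by
        rw [hc] at h h2
        simp at h2
        have : (d : ℝ) ≠ 0 := by positivity
        simpa [this, h2] using h
      exact h3 (by simp [hg0]) (by simp [hc])
    · refine hnd (t - d * g.eval t / g.derivative.eval t) 1 t (by simp) ?_ ?_
      · field_simp; ring
      · field_simp; linear_combination h
  have hHpos : ∀ t, 0 < (d - 1) * g.derivative.eval t ^ 2
      - d * g.eval t * g.derivative.derivative.eval t := by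
    obtain ⟨a, ha, b, hb, hab⟩ := Finset.one_lt_card.1
      (show 1 < g.derivative.roots.toFinset.card by omega)
    obtain ⟨t₀, ht₀⟩ : ∃ t, g.derivative.derivative.eval t = 0 := by
      have key : ∀ a b, a ∈ g.derivative.roots.toFinset → b ∈ g.derivative.roots.toFinset → a < b →
          ∃ t, g.derivative.derivative.eval t = 0 := by
        intro a b ha hb hab
        simp at ha hb
        obtain ⟨c, _, hc⟩ := exists_deriv_eq_zero (f := fun t => g.derivative.eval t) hab
          g.derivative.continuous.continuousOn (by rw [ha.2, hb.2])
        exact ⟨c, by simpa using hc⟩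
      rcases lt_or_gt_of_ne hab with h | h
      · exact key a b ha hb h
      · exact key b a hb ha h
    intro t
    by_contra hneg
    push Not at hneg
    have hcont : Continuous fun t => ((d : ℝ) - 1) * g.derivative.eval t ^ 2
      - d * g.eval t * g.derivative.derivative.eval t := by fun_prop
    obtain ⟨x, hx⟩ := mem_range_of_exists_le_of_exists_ge hcont (c := 0) ⟨t, hneg⟩ ⟨t₀, by
      rw [ht₀]
      have : (0 : ℝ) ≤ d - 1 := by linarith
      have := mul_nonneg this (sq_nonneg (g.derivative.eval t₀))
      linarith⟩
    exact hH x hx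
  have hcrit : ∀ m, g.derivative.eval m = 0 →
      g.eval m * g.derivative.derivative.eval m < 0 := by
    intro m hm
    have := hHpos m
    rw [hm] at this
    by_contra hcon
    push Not at hcon
    have := mul_nonneg (show (0 : ℝ) ≤ d by linarith) hcon
    nlinarith
  have h1 := aux_count g (by
    rw [← Polynomial.natDegree_pos_iff_degree_pos]; omega) hcrit
    (Finset.card_pos.1 (by omega))
  have h2 : g.roots.toFinset.card ≤ d :=
    (Multiset.toFinset_card_le _).trans (g.card_roots'.trans hdeg.le)
  rw [count_eq v w hvw hf hv]
  change g.roots.toFinset.card = d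
  omega

/-- let `f` be a real binary form of degree `d`, `3 ≤ d ≤ 5`, with
distinct complex roots. If for every `(a,b) ≠ (0,0)` the form `a·∂f/∂x + b·∂f/∂y`
has `d - 1` distinct real roots, then `f` has `d` distinct real roots. -/
theorem stmt9 (d : ℕ) (hd3 : 3 ≤ d) (hd5 : d ≤ 5) (f : MvPolynomial (Fin 2) ℝ)
    (hf : f.IsHomogeneous d) (hsf : SquarefreeC f)
    (hpolar : ∀ a b : ℝ, (a, b) ≠ (0, 0) →
      (projRoots (C a * pderiv 0 f + C b * pderiv 1 f)).ncard = d - 1) :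
    (projRoots f).ncard = d := by
  refine main_aux d hd3 f hf ?_ hpolar
  rintro rfl
  unfold SquarefreeC at hsf
  rw [map_zero] at hsf
  exact not_squarefree_zero hsf
end
end

section
/- Let f be a real binary form of degree d with 3 ≤ d ≤ 5 and with distinct roots (squarefree over ℂ). If the real rank of f equals d, then f has d distinct real roots. -/
open MvPolynomial

noncomputable section

/-- functional version of `HasDecomp` -/
def FD (F : ℝ → ℝ → ℝ) (d r : ℕ) : Prop :=
  ∃ c a b : Fin r → ℝ, (∀ j, (a j, b j) ≠ (0, 0)) ∧
    ∀ x y, F x y = ∑ j, c j * (a j * x + b j * y) ^ d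

lemma FD.comp {F G : ℝ → ℝ → ℝ} {d r : ℕ} (h : FD F d r) (p q u v : ℝ)
    (hdet : p * v - q * u ≠ 0) (hG : ∀ x y, G x y = F (p * x + q * y) (u * x + v * y)) :
    FD G d r := by
  obtain ⟨c, a, b, hab, hF⟩ := h
  refine ⟨c, fun j => a j * p + b j * u, fun j => a j * q + b j * v, ?_, ?_⟩
  · intro j hj
    apply hab j
    simp only [Prod.mk.injEq] at hj ⊢
    obtain ⟨h1, h2⟩ := hj
    constructor
    · apply (mul_eq_zero.mp (?_ : a j * (p * v - q * u) = 0)).resolve_right hdet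
      linear_combination v * h1 - u * h2
    · apply (mul_eq_zero.mp (?_ : b j * (p * v - q * u) = 0)).resolve_right hdet
      linear_combination p * h2 - q * h1
  · intro x y
    rw [hG, hF]
    refine Finset.sum_congr rfl fun j _ => ?_
    ring

lemma FD_iff {f : MvPolynomial (Fin 2) ℝ} {d r : ℕ} (h : FD (fun x y => eval ![x, y] f) d r) :
    HasDecomp f d r := by
  obtain ⟨c, a, b, hab, hF⟩ := h
  refine ⟨c, a, b, hab, ?_⟩
  apply MvPolynomial.funext
  intro z
  have hz : z = ![z 0, z 1] := by
    ext i; fin_cases i <;> rfl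
  rw [hz]
  refine (hF (z 0) (z 1)).trans ?_
  simp [lin]

/-- vandermonde + recurrence -/
lemma FD_quintic (f0 f1 f2 f3 f4 f5 g0 g1 g2 g3 g4 : ℝ) (t : Fin 4 → ℝ)
    (ht : Function.Injective t) (hg4 : g4 ≠ 0)
    (hroot : ∀ j, g0 + g1 * t j + g2 * t j ^ 2 + g3 * t j ^ 3 + g4 * t j ^ 4 = 0)
    (h0 : g0 * f0 + g1 * f1 + g2 * f2 + g3 * f3 + g4 * f4 = 0)
    (h1 : g0 * f1 + g1 * f2 + g2 * f3 + g3 * f4 + g4 * f5 = 0) :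
    FD (fun x y => f5 * x ^ 5 + 5 * f4 * x ^ 4 * y + 10 * f3 * x ^ 3 * y ^ 2
      + 10 * f2 * x ^ 2 * y ^ 3 + 5 * f1 * x * y ^ 4 + f0 * y ^ 5) 5 4 := by
  have hdet : IsUnit (Matrix.vandermonde t).transpose := by
    rw [Matrix.isUnit_iff_isUnit_det, Matrix.det_transpose, isUnit_iff_ne_zero]
    exact Matrix.det_vandermonde_ne_zero_iff.mpr ht
  obtain ⟨c, hc⟩ := (Matrix.mulVec_surjective_iff_isUnit.mpr hdet) ![f0, f1, f2, f3]
  have e0 := congrFun hc 0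
  have e1 := congrFun hc 1
  have e2 := congrFun hc 2
  have e3 := congrFun hc 3
  simp [Matrix.mulVec, dotProduct, Fin.sum_univ_four, Matrix.vandermonde] at e0 e1 e2 e3
  have r0 := hroot 0
  have r1 := hroot 1
  have r2 := hroot 2
  have r3 := hroot 3
  have e4 : t 0 ^ 4 * c 0 + t 1 ^ 4 * c 1 + t 2 ^ 4 * c 2 + t 3 ^ 4 * c 3 = f4 := by
    apply mul_left_cancel₀ hg4
    linear_combination c 0 * r0 + c 1 * r1 + c 2 * r2 + c 3 * r3 - g0 * e0 - g1 * e1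
      - g2 * e2 - g3 * e3 - h0
  have e5 : t 0 ^ 5 * c 0 + t 1 ^ 5 * c 1 + t 2 ^ 5 * c 2 + t 3 ^ 5 * c 3 = f5 := by
    apply mul_left_cancel₀ hg4
    linear_combination t 0 * c 0 * r0 + t 1 * c 1 * r1 + t 2 * c 2 * r2 + t 3 * c 3 * r3
      - g0 * e1 - g1 * e2 - g2 * e3 - g3 * e4 - h1
  refine ⟨c, t, fun _ => 1, by simp, fun x y => ?_⟩
  simp only [Fin.sum_univ_four]
  linear_combination -(x ^ 5 * e5 + 5 * x ^ 4 * y * e4 + 10 * x ^ 3 * y ^ 2 * e3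
    + 10 * x ^ 2 * y ^ 3 * e2 + 5 * x * y ^ 4 * e1 + y ^ 5 * e0)

lemma four_roots (g0 g1 g2 g3 g4 : ℝ) (a0 : 0 < g0) (a4 : 0 < g4)
    (ap : g0 + g1 + g2 + g3 + g4 < 0) (am : g0 - g1 + g2 - g3 + g4 < 0) :
    ∃ t : Fin 4 → ℝ, Function.Injective t ∧
      ∀ j, g0 + g1 * t j + g2 * t j ^ 2 + g3 * t j ^ 3 + g4 * t j ^ 4 = 0 := by
  have key : ∀ g0 g1 g2 g3 g4 : ℝ, 0 < g0 → g0 + g1 + g2 + g3 + g4 < 0 →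
      ∃ t ∈ Set.Ioo (0:ℝ) 1, g0 + g1 * t + g2 * t ^ 2 + g3 * t ^ 3 + g4 * t ^ 4 = 0 := by
    intro g0 g1 g2 g3 g4 h0 h1
    have hc : ContinuousOn (fun t : ℝ => g0 + g1 * t + g2 * t ^ 2 + g3 * t ^ 3 + g4 * t ^ 4)
        (Set.Icc 0 1) := by fun_prop
    have := intermediate_value_Ioo' (zero_le_one) hc
    have h2 := this (show (0:ℝ) ∈ _ by constructor <;> simp <;> linarith)
    simpa using h2
  obtain ⟨t1, ⟨p1, q1⟩, e1⟩ := key g0 g1 g2 g3 g4 a0 ap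
  obtain ⟨t2, ⟨p2, q2⟩, e2⟩ := key g0 (-g1) g2 (-g3) g4 a0 (by linarith)
  obtain ⟨t3, ⟨p3, q3⟩, e3⟩ := key g4 g3 g2 g1 g0 a4 (by linarith)
  obtain ⟨t4, ⟨p4, q4⟩, e4⟩ := key g4 (-g3) g2 (-g1) g0 a4 (by linarith)
  have i3 : 1 < t3⁻¹ := (one_lt_inv₀ p3).mpr q3
  have i4 : 1 < t4⁻¹ := (one_lt_inv₀ p4).mpr q4
  refine ⟨![-t4⁻¹, -t2, t1, t3⁻¹], ?_, ?_⟩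
  · apply StrictMono.injective
    rw [Fin.strictMono_iff_lt_succ]
    intro i
    fin_cases i <;> simp <;> linarith
  · intro j
    fin_cases j
    · simp; field_simp; linear_combination e4
    · simp; linear_combination e2
    · simp; linear_combination e1
    · simp; field_simp; linear_combination e3

/-- normal form quintic -/
lemma FD_five_nf (h k ρ τ : ℝ) (hk : h ^ 2 + k ^ 2 = 1) (hρ : 0 ≤ ρ) (hτ : 0 ≤ τ)
    (h0 : τ = 0 → h = 1 ∧ k = 0) :
    FD (fun x y => (x ^ 2 + y ^ 2) * ((ρ * h) * (x ^ 3 - 3 * x * y ^ 2)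
      - (ρ * k) * (3 * x ^ 2 * y - y ^ 3) +
      (τ * (h ^ 3 - 3 * h * k ^ 2) * x - τ * (3 * h ^ 2 * k - k ^ 3) * y) * (x ^ 2 + y ^ 2)))
      5 4 := by
  obtain ⟨s, e, hs, he, k1, k2, k3, k4⟩ : ∃ s e : ℝ, s * (2 * ρ + τ) = 2 * ρ ∧ e * τ = 0 ∧
      0 < 2 - 2 * s * (h ^ 2 - k ^ 2) + e ∧ 0 < 2 + 2 * s * (h ^ 2 - k ^ 2) + e ∧
      e < 2 - 4 * s * h * k ∧ e < 2 + 4 * s * h * k := by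
    rcases hτ.eq_or_lt with h1 | h1
    · obtain ⟨rfl, rfl⟩ := h0 h1.symm
      refine ⟨1, 1, ?_, ?_, ?_⟩
      · rw [← h1]; ring
      · rw [← h1]; ring
      · norm_num
    · have hp : 0 < 2 * ρ + τ := by positivity
      have hs0 : 0 ≤ 2 * ρ / (2 * ρ + τ) := by positivity
      have hs1 : 2 * ρ / (2 * ρ + τ) < 1 := by
        rw [div_lt_one hp]; linarith
      refine ⟨2 * ρ / (2 * ρ + τ), 0, by field_simp, by simp, ?_⟩
      generalize 2 * ρ / (2 * ρ + τ) = s at hs0 hs1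
      have m1 := mul_nonneg hs0 (sq_nonneg h)
      have m2 := mul_nonneg hs0 (sq_nonneg k)
      have m3 := mul_nonneg hs0 (sq_nonneg (h - k))
      have m4 := mul_nonneg hs0 (sq_nonneg (h + k))
      have m5 : s * h ^ 2 + s * k ^ 2 = s := by rw [← mul_add, hk, mul_one]
      refine ⟨?_, ?_, ?_, ?_⟩ <;> nlinarith
  obtain ⟨t, ht, hroot⟩ := four_roots (2 + 2 * s * (h ^ 2 - k ^ 2) + e) (8 * s * h * k)
    (-12 + 2 * e) (8 * s * h * k) (2 - 2 * s * (h ^ 2 - k ^ 2) + e) k2 k1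
    (by linarith) (by linarith)
  have := FD_quintic (ρ * k - τ * (3 * h ^ 2 * k - k ^ 3))
    ((-3 * (ρ * h) + τ * (h ^ 3 - 3 * h * k ^ 2)) / 5)
    ((-2 * (ρ * k) - 2 * (τ * (3 * h ^ 2 * k - k ^ 3))) / 10)
    ((-2 * (ρ * h) + 2 * (τ * (h ^ 3 - 3 * h * k ^ 2))) / 10)
    ((-3 * (ρ * k) - (τ * (3 * h ^ 2 * k - k ^ 3))) / 5)
    (ρ * h + τ * (h ^ 3 - 3 * h * k ^ 2)) _ _ _ _ _ t ht k1.ne' hroot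
    (by grind) (by grind)
  convert this using 3
  ring

lemma polar_re_im (z : ℂ) : ∃ r θ : ℝ, 0 ≤ r ∧ z = r * Complex.exp (θ * Complex.I) :=
  ⟨‖z‖, z.arg, norm_nonneg z, (Complex.norm_mul_exp_arg_mul_I z).symm⟩

lemma FD_five (A B D E : ℝ) : FD (fun x y => (x ^ 2 + y ^ 2) * (A * (x ^ 3 - 3 * x * y ^ 2)
      - B * (3 * x ^ 2 * y - y ^ 3) + (D * x - E * y) * (x ^ 2 + y ^ 2))) 5 4 := by
  obtain ⟨h, k, p, q, ρ, τ, hk, hpq, hρ, hτ, h0, hα, hβ⟩ : ∃ h k p q ρ τ : ℝ,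
      h ^ 2 + k ^ 2 = 1 ∧ p ^ 2 + q ^ 2 = 1 ∧ 0 ≤ ρ ∧ 0 ≤ τ ∧ (τ = 0 → h = 1 ∧ k = 0) ∧
      (⟨A, B⟩ : ℂ) = ρ * ⟨h, k⟩ * ⟨p, -q⟩ ^ 3 ∧ (⟨D, E⟩ : ℂ) = τ * ⟨h, k⟩ ^ 3 * ⟨p, -q⟩ := by
    obtain ⟨ρ, u, hρ, hα⟩ := polar_re_im ⟨A, B⟩
    obtain ⟨τ, w, hτ, hβ⟩ := polar_re_im ⟨D, E⟩
    have ex : ∀ θ : ℝ, (⟨Real.cos θ, Real.sin θ⟩ : ℂ) = Complex.exp (θ * Complex.I) := by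
      intro θ
      apply Complex.ext <;> simp [Complex.exp_ofReal_mul_I_re, Complex.exp_ofReal_mul_I_im]
    have ex' : ∀ θ : ℝ, (⟨Real.cos θ, -Real.sin θ⟩ : ℂ) = Complex.exp (-θ * Complex.I) := by
      intro θ
      rw [← Complex.ofReal_neg, ← ex]; simp
    by_cases h1 : τ = 0
    · refine ⟨1, 0, Real.cos (-(u / 3)), Real.sin (-(u / 3)), ρ, τ, by norm_num, by simp,
        hρ, hτ, by simp, ?_, ?_⟩
      · rw [hα, ex', ← Complex.exp_nat_mul]
        have : (⟨1, 0⟩ : ℂ) = 1 := rfl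
        rw [this, mul_one]
        congr 2
        push_cast; ring
      · rw [hβ, h1]; simp
    · refine ⟨Real.cos (u + 3 * ((w - 3 * u) / 8)), Real.sin (u + 3 * ((w - 3 * u) / 8)),
        Real.cos ((w - 3 * u) / 8), Real.sin ((w - 3 * u) / 8), ρ, τ, by simp, by simp, hρ, hτ,
        fun h => absurd h h1, ?_, ?_⟩
      · rw [hα, ex, ex', ← Complex.exp_nat_mul, mul_assoc, ← Complex.exp_add]
        congr 2
        push_cast; ring
      · rw [hβ, ex, ex', ← Complex.exp_nat_mul, mul_assoc, ← Complex.exp_add]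
        congr 2
        push_cast; ring
  have hA := congrArg Complex.re hα
  have hB := congrArg Complex.im hα
  have hD := congrArg Complex.re hβ
  have hE := congrArg Complex.im hβ
  simp [pow_succ] at hA hB hD hE
  apply (FD_five_nf h k ρ τ hk hρ hτ h0).comp p q (-q) p (by nlinarith)
  intro x y
  have hxy : (p * x + q * y) ^ 2 + (-q * x + p * y) ^ 2 = x ^ 2 + y ^ 2 := by
    linear_combination (x ^ 2 + y ^ 2) * hpq
  simp only [hxy]
  rw [hA, hB, hD, hE]
  ring

lemma FD_four (G D E : ℝ) : FD (fun x y => (x ^ 2 + y ^ 2) * (G * (x ^ 2 - y ^ 2)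
      - E * (2 * x * y) + D * (x ^ 2 + y ^ 2))) 4 3 := by
  obtain ⟨p, q, ρ, hpq, hG⟩ : ∃ p q ρ : ℝ, p ^ 2 + q ^ 2 = 1 ∧ (⟨G, E⟩ : ℂ) = ρ * ⟨p, -q⟩ ^ 2 := by
    obtain ⟨ρ, u, hρ, hα⟩ := polar_re_im ⟨G, E⟩
    refine ⟨Real.cos (u / 2), -Real.sin (u / 2), ρ, by simp, ?_⟩
    have : (⟨Real.cos (u / 2), - -Real.sin (u / 2)⟩ : ℂ)
        = Complex.exp ((u / 2 : ℝ) * Complex.I) := by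
      apply Complex.ext <;> simp only [Complex.exp_ofReal_mul_I_re, Complex.exp_ofReal_mul_I_im,
        neg_neg]
    rw [hα, this, ← Complex.exp_nat_mul]
    congr 2
    push_cast; ring
  have hA := congrArg Complex.re hG
  have hB := congrArg Complex.im hG
  simp [pow_succ] at hA hB
  have key : ∀ a b : ℝ, 0 ≤ (a + b) / a → a ≠ 0 →
      FD (fun x y => (x ^ 2 + y ^ 2) * (a * x ^ 2 + b * y ^ 2)) 4 3 := by
    intro a b hab ha
    have ht : (Real.sqrt ((a + b) / a / 6)) ^ 2 * (6 * a) = a + b := by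
      rw [Real.sq_sqrt (by positivity)]; field_simp
    generalize Real.sqrt ((a + b) / a / 6) = t at ht
    refine ⟨![a / 2, a / 2, b - a * t ^ 4], ![1, 1, 0], ![t, -t, 1], ?_, ?_⟩
    · intro j; fin_cases j <;> simp
    · intro x y
      simp [Fin.sum_univ_three]
      linear_combination - x ^ 2 * y ^ 2 * ht
  have main : FD (fun x y => (x ^ 2 + y ^ 2) * ((ρ + D) * x ^ 2 + (D - ρ) * y ^ 2)) 4 3 := by
    generalize ρ + D = a
    generalize D - ρ = b
    by_cases h1 : a ≠ 0 ∧ 0 ≤ (a + b) / a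
    · exact key a b h1.2 h1.1
    by_cases h2 : b ≠ 0 ∧ 0 ≤ (b + a) / b
    · apply (key b a h2.2 h2.1).comp 0 1 1 0 (by norm_num)
      intro x y; ring
    have h3 : a = 0 ∧ b = 0 := by
      by_cases ha : a = 0
      · by_cases hb : b = 0
        · exact ⟨ha, hb⟩
        · exfalso; apply h2; refine ⟨hb, ?_⟩
          rw [ha, add_zero, div_self hb]; norm_num
      · exfalso
        by_cases hb : b = 0
        · apply h1; refine ⟨ha, ?_⟩
          rw [hb, add_zero, div_self ha]; norm_num
        · have h1' : (a + b) / a < 0 := by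
            by_contra h; exact h1 ⟨ha, not_lt.mp h⟩
          have h2' : (b + a) / b < 0 := by
            by_contra h; exact h2 ⟨hb, not_lt.mp h⟩
          rw [div_neg_iff] at h1' h2'
          grind
    obtain ⟨rfl, rfl⟩ := h3
    exact ⟨fun _ => 0, fun _ => 1, fun _ => 1, by simp, by simp⟩
  apply main.comp p q (-q) p (by nlinarith)
  intro x y
  have hxy : (p * x + q * y) ^ 2 + (-q * x + p * y) ^ 2 = x ^ 2 + y ^ 2 := by
    linear_combination (x ^ 2 + y ^ 2) * hpq
  simp only [hxy]
  have : (ρ + D) * (p * x + q * y) ^ 2 + (D - ρ) * (-q * x + p * y) ^ 2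
     = ρ * ((p * x + q * y) ^ 2 - (-q * x + p * y) ^ 2) + D * (x ^ 2 + y ^ 2) := by
    rw [← hxy]; ring
  rw [this, hA, hB]
  ring

lemma FD_three (a b : ℝ) : FD (fun x y => (x ^ 2 + y ^ 2) * (a * x + b * y)) 3 2 := by
  by_cases h : a = 0 ∧ b = 0
  · obtain ⟨rfl, rfl⟩ := h
    exact ⟨fun _ => 0, fun _ => 1, fun _ => 1, by simp, by simp⟩
  have hpos : a ^ 2 + b ^ 2 ≠ 0 := by
    intro h0; apply h; constructor <;> nlinarith [sq_nonneg a, sq_nonneg b]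
  have ht : (Real.sqrt 3) ^ 2 = 3 := Real.sq_sqrt (by norm_num)
  have h1 : FD (fun x y => (x ^ 2 + y ^ 2) * x) 3 2 := by
    refine ⟨![1 / 2, 1 / 2], ![1, 1], ![Real.sqrt 3 / 3, -Real.sqrt 3 / 3], ?_, ?_⟩
    · intro j; fin_cases j <;> simp
    · intro x y
      simp [Fin.sum_univ_two]
      linear_combination (- x * y ^ 2 / 3) * ht
  have h2 : FD (fun x y => (x ^ 2 + y ^ 2) * x / (a ^ 2 + b ^ 2)) 3 2 := by
    obtain ⟨c, u, v, huv, hF⟩ := h1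
    refine ⟨fun j => c j / (a ^ 2 + b ^ 2), u, v, huv, fun x y => ?_⟩
    simp only [hF, Finset.sum_div]
    refine Finset.sum_congr rfl fun j _ => ?_
    ring
  apply h2.comp a b (-b) a (by intro h; apply hpos; linarith)
  intro x y
  field_simp
  ring

lemma homog_split (n : ℕ) : ∀ P : Polynomial ℝ, P.natDegree ≤ n →
    (∀ z : ℂ, P.aeval z = 0 → z.im = 0) → ∃ (c : ℝ) (a b : Fin n → ℝ),
      (∀ j, (a j, b j) ≠ (0, 0)) ∧ P.homogenize n = C c * ∏ j, lin (a j) (b j) := by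
  induction n with
  | zero =>
    intro P hP _
    rw [Polynomial.eq_C_of_natDegree_le_zero hP]
    exact ⟨P.coeff 0, fun _ => 1, fun _ => 1, by simp, by simp⟩
  | succ n ih =>
    intro P hP hz
    by_cases hd : P.natDegree ≤ n
    · obtain ⟨c, a, b, hab, hP'⟩ := ih P hd hz
      refine ⟨c, Fin.cons 0 a, Fin.cons 1 b, ?_, ?_⟩
      · intro j
        refine Fin.cases ?_ (fun i => ?_) j
        · simp
        · simpa using hab i
      · have := Polynomial.homogenize_mul P 1 hd (show (1 : Polynomial ℝ).natDegree ≤ 1 by simp)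
        rw [mul_one, hP'] at this
        rw [this, Fin.prod_univ_succ]
        simp [lin]
        ring
    · have hpos : 0 < P.natDegree := by omega
      obtain ⟨z, hz0⟩ := IsAlgClosed.exists_aeval_eq_zero ℂ P
        (Polynomial.natDegree_pos_iff_degree_pos.mp hpos).ne'
      have him := hz z hz0
      have hzr : z = ((z.re : ℝ) : ℂ) := by apply Complex.ext <;> simp [him]
      have hr : P.IsRoot z.re := by
        rw [hzr] at hz0
        have : P.aeval ((algebraMap ℝ ℂ) z.re) = 0 := hz0
        rw [Polynomial.aeval_algebraMap_apply] at this
        simpa using this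
      obtain ⟨Q, hQ⟩ := Polynomial.dvd_iff_isRoot.mpr hr
      have hQd : Q.natDegree ≤ n := by
        have hQ0 : Q ≠ 0 := by
          rintro rfl
          rw [mul_zero] at hQ
          rw [hQ] at hpos
          simp at hpos
        have := congrArg Polynomial.natDegree hQ
        rw [Polynomial.natDegree_mul (Polynomial.X_sub_C_ne_zero _) hQ0,
          Polynomial.natDegree_X_sub_C] at this
        omega
      obtain ⟨c, a, b, hab, hP'⟩ := ih Q hQd (by
        intro w hw
        apply hz
        rw [hQ, map_mul, hw, mul_zero])
      refine ⟨c, Fin.cons 1 a, Fin.cons (-z.re) b, ?_, ?_⟩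
      · intro j
        refine Fin.cases ?_ (fun i => ?_) j
        · simp
        · simpa using hab i
      · have := Polynomial.homogenize_mul (Polynomial.X - Polynomial.C z.re) Q
          (m := 1) (Polynomial.natDegree_X_sub_C _).le hQd
        rw [← hQ, hP', add_comm] at this
        rw [this, Fin.prod_univ_succ]
        simp [lin]
        ring

lemma splits_of_no_root (d : ℕ) (hd : 1 ≤ d) (f : MvPolynomial (Fin 2) ℝ)
    (hsf : SquarefreeC f) (P : Polynomial ℝ) (hP : P.natDegree ≤ d) (hf : P.homogenize d = f)
    (hz : ∀ z : ℂ, P.aeval z = 0 → z.im = 0) : SplitsDistinct f d := by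
  obtain ⟨c, a, b, hab, hfac⟩ := homog_split d P hP hz
  rw [hf] at hfac
  have hf0 : f ≠ 0 := by
    rintro rfl
    rw [SquarefreeC, map_zero] at hsf
    exact not_squarefree_zero hsf
  have hc : c ≠ 0 := by
    rintro rfl
    apply hf0; rw [hfac]; simp
  obtain ⟨m, rfl⟩ : ∃ m, d = m + 1 := ⟨d - 1, by omega⟩
  have hnd : ∀ i j, i ≠ j → a i * b j ≠ a j * b i := by
    intro i j hij h
    -- lin j is a multiple of lin i
    obtain ⟨e, he⟩ : ∃ e : ℝ, lin (a j) (b j) = C e * lin (a i) (b i) := by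
      by_cases hai : a i = 0
      · have hbi : b i ≠ 0 := by
          intro h'; exact hab i (by rw [hai, h'])
        have haj : a j = 0 := by
          rw [hai, zero_mul] at h
          exact (mul_eq_zero.mp h.symm).resolve_right hbi
        refine ⟨b j / b i, ?_⟩
        rw [lin, lin, hai, haj]
        simp only [map_zero, zero_mul, zero_add]
        rw [← mul_assoc, ← C_mul, div_mul_cancel₀ _ hbi]
      · refine ⟨a j / a i, ?_⟩
        rw [lin, lin, mul_add, ← mul_assoc, ← mul_assoc, ← C_mul, ← C_mul,
          div_mul_cancel₀ _ hai]
        congr 3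
        field_simp
        linarith
    have hdvd : lin (a i) (b i) * lin (a i) (b i) ∣ f := by
      rw [hfac, ← Finset.mul_prod_erase _ _ (Finset.mem_univ i),
        ← Finset.mul_prod_erase _ _ (Finset.mem_erase.mpr ⟨hij.symm, Finset.mem_univ j⟩), he]
      exact ⟨C c * C e * ∏ x ∈ (Finset.univ.erase i).erase j, lin (a x) (b x), by ring⟩
    have hdvd' := map_dvd (MvPolynomial.map (algebraMap ℝ ℂ)) hdvd
    rw [map_mul] at hdvd'
    have hu := hsf _ hdvd'
    have hu2 := hu.map (MvPolynomial.eval ![((b i : ℝ) : ℂ), -((a i : ℝ) : ℂ)])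
    have : MvPolynomial.eval ![((b i : ℝ) : ℂ), -((a i : ℝ) : ℂ)]
      (MvPolynomial.map (algebraMap ℝ ℂ) (lin (a i) (b i))) = 0 := by
      simp [lin]; ring
    rw [this] at hu2
    exact not_isUnit_zero hu2
  let s : Fin (m + 1) → ℝ := fun j => if j = 0 then c else 1
  have hs : ∀ j, s j ≠ 0 := by
    intro j; simp only [s]; split_ifs <;> simp [hc]
  refine ⟨fun j => s j * a j, fun j => s j * b j, ?_, ?_, ?_⟩
  · intro j h
    apply hab j
    simp only [Prod.mk.injEq, mul_eq_zero, hs j, false_or] at h ⊢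
    exact h
  · intro i j hij h
    apply hnd i j hij
    have : s i * s j ≠ 0 := mul_ne_zero (hs i) (hs j)
    apply mul_left_cancel₀ this
    linear_combination h
  · have h1 : ∀ j, lin (s j * a j) (s j * b j) = C (s j) * lin (a j) (b j) := by
      intro j; simp [lin]; ring
    simp only [h1, Finset.prod_mul_distrib]
    rw [hfac]
    congr 1
    rw [Finset.prod_eq_single 0]
    · simp [s]
    · intro j _ hj; simp [s, hj]
    · simp

/-- evaluation of the homogenization -/
lemma eval_hom (Q : Polynomial ℝ) (n : ℕ) (x y : ℝ) :
    eval ![x, y] (Q.homogenize n) =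
      ∑ i ∈ Finset.range (n + 1), Q.coeff i * (x ^ i * y ^ (n - i)) := by
  rw [Polynomial.homogenize, Finset.Nat.sum_antidiagonal_eq_sum_range_succ_mk, map_sum]
  refine Finset.sum_congr rfl fun i _ => ?_
  rw [eval_monomial, Finsupp.prod_fintype _ _ (by simp)]
  simp [Fin.prod_univ_two]

lemma decomp_of_root (n : ℕ) (h1 : 1 ≤ n) (h3 : n ≤ 3) (P : Polynomial ℝ) (hP0 : P ≠ 0)
    (hP : P.natDegree ≤ 2 + n) (z : ℂ) (hz : P.aeval z = 0) (him : z.im ≠ 0) :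
    HasDecomp (P.homogenize (2 + n)) (2 + n) (1 + n) := by
  obtain ⟨Q, hQ⟩ := P.quadratic_dvd_of_aeval_eq_zero_im_ne_zero hz him
  set R : Polynomial ℝ := Polynomial.X ^ 2 - Polynomial.C (2 * z.re) * Polynomial.X
    + Polynomial.C (‖z‖ ^ 2) with hR
  have hRd : R.natDegree = 2 := by rw [hR]; compute_degree!
  have hQd : Q.natDegree ≤ n := by
    have hQ0 : Q ≠ 0 := by rintro rfl; simp at hQ; exact hP0 hQ
    have hR0 : R ≠ 0 := by rintro h; rw [h] at hRd; simp at hRd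
    have := congrArg Polynomial.natDegree hQ
    rw [Polynomial.natDegree_mul hR0 hQ0] at this
    omega
  have hfac := Polynomial.homogenize_mul R Q hRd.le hQd
  rw [← hQ] at hfac
  apply FD_iff
  set u := z.re
  set v := z.im
  have hn : ‖z‖ ^ 2 = u ^ 2 + v ^ 2 := by
    rw [← Complex.normSq_eq_norm_sq, Complex.normSq_apply]; ring
  have hev : ∀ x y, eval ![x, y] (P.homogenize (2 + n)) =
      ((x - u * y) ^ 2 + (v * y) ^ 2) *
        ∑ i ∈ Finset.range (n + 1), Q.coeff i * (x ^ i * y ^ (n - i)) := by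
    intro x y
    rw [hfac, map_mul, eval_hom Q]
    congr 1
    rw [hR, hn, Polynomial.homogenize_add, Polynomial.homogenize_sub,
      Polynomial.homogenize_C_mul, Polynomial.homogenize_C, Polynomial.homogenize_X_pow le_rfl,
      Polynomial.homogenize_X two_ne_zero]
    simp only [map_add, map_sub, map_mul, map_pow, eval_X, eval_C]
    simp
    ring
  generalize Q.coeff = g at hev
  have hm : v * v⁻¹ = 1 := mul_inv_cancel₀ him
  set m := v⁻¹
  interval_cases n
  · apply (FD_three (g 1) (g 1 * (u * m) + g 0 * m)).comp 1 (-u) 0 v (by simpa using him)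
    intro x y
    rw [hev]
    simp only [Finset.sum_range_succ, Finset.sum_range_zero]
    grind
  · have := FD_four ((g 2 - (g 2 * (u * m) ^ 2 + g 1 * (u * m) * m + g 0 * m ^ 2)) / 2)
      ((g 2 + (g 2 * (u * m) ^ 2 + g 1 * (u * m) * m + g 0 * m ^ 2)) / 2)
      (-(2 * (u * m) * g 2 + m * g 1) / 2)
    apply this.comp 1 (-u) 0 v (by simpa using him)
    intro x y
    rw [hev]
    have e1 : x = (x - u * y) + (u * m) * (v * y) := by linear_combination (-u * y) * hm
    have e2 : y = m * (v * y) := by linear_combination (-y) * hm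
    have e3 : 1 * x + -u * y = x - u * y := by ring
    have e4 : 0 * x + v * y = v * y := by ring
    rw [e3, e4]
    generalize x - u * y = X at *
    generalize v * y = Y at *
    simp only [Finset.sum_range_succ, Finset.sum_range_zero]
    rw [e1, e2]
    ring
  · have := FD_five
      ((g 3 - (3 * (u * m) ^ 2 * g 3 + 2 * (u * m) * m * g 2 + m ^ 2 * g 1)) / 4)
      (((u * m) ^ 3 * g 3 + (u * m) ^ 2 * m * g 2 + (u * m) * m ^ 2 * g 1 + m ^ 3 * g 0
        - (3 * (u * m) * g 3 + m * g 2)) / 4)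
      ((3 * g 3 + (3 * (u * m) ^ 2 * g 3 + 2 * (u * m) * m * g 2 + m ^ 2 * g 1)) / 4)
      (-((3 * (u * m) * g 3 + m * g 2) + 3 * ((u * m) ^ 3 * g 3 + (u * m) ^ 2 * m * g 2
        + (u * m) * m ^ 2 * g 1 + m ^ 3 * g 0)) / 4)
    apply this.comp 1 (-u) 0 v (by simpa using him)
    intro x y
    rw [hev]
    have e1 : x = (x - u * y) + (u * m) * (v * y) := by linear_combination (-u * y) * hm
    have e2 : y = m * (v * y) := by linear_combination (-y) * hm
    have e3 : 1 * x + -u * y = x - u * y := by ring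
    have e4 : 0 * x + v * y = v * y := by ring
    rw [e3, e4]
    generalize x - u * y = X at *
    generalize v * y = Y at *
    simp only [Finset.sum_range_succ, Finset.sum_range_zero]
    rw [e1, e2]
    ring

/-- let `f` be a real binary form of degree `d`, `3 ≤ d ≤ 5`, with
distinct complex roots. If the real rank of `f` is `d`, then `f` has `d` distinct
real roots, i.e. `f` is a product of `d` pairwise non-proportional real linear forms. -/
theorem stmt10 (d : ℕ) (hd3 : 3 ≤ d) (hd5 : d ≤ 5) (f : MvPolynomial (Fin 2) ℝ)
    (hf : f.IsHomogeneous d) (hsf : SquarefreeC f) (hrank : realRank f d = d) :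
    SplitsDistinct f d := by
  have hf0 : f ≠ 0 := by
    rintro rfl
    rw [SquarefreeC, map_zero] at hsf
    exact not_squarefree_zero hsf
  have hP := Polynomial.homogenize_eq_of_isHomogeneous hf rfl
  obtain ⟨P, hPd, hP⟩ : ∃ P : Polynomial ℝ, P.natDegree ≤ d ∧ P.homogenize d = f := by
    generalize (MvPolynomial.aeval ![(Polynomial.X : Polynomial ℝ), 1]) f = P0 at hP
    refine ⟨∑ i ∈ Finset.range (d + 1), Polynomial.monomial i (P0.coeff i), ?_, ?_⟩
    · apply Polynomial.natDegree_sum_le_of_forall_le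
      intro i hi
      have h2 : i ≤ d := by simp at hi; omega
      exact (Polynomial.natDegree_monomial_le _).trans h2
    · rw [← hP]
      apply MvPolynomial.ext
      intro s
      rw [Polynomial.coeff_homogenize, Polynomial.coeff_homogenize]
      split_ifs with h
      · simp [Polynomial.coeff_monomial]
        omega
      · rfl
  by_cases hz : ∀ z : ℂ, P.aeval z = 0 → z.im = 0
  · exact splits_of_no_root d (by omega) f hsf P hPd hP hz
  · exfalso
    push Not at hz
    obtain ⟨z, hz0, him⟩ := hz
    obtain ⟨n, rfl⟩ : ∃ n, d = 2 + n := ⟨d - 2, by omega⟩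
    have hP0 : P ≠ 0 := by
      rintro rfl
      apply hf0; rw [← hP]; simp
    have := decomp_of_root n (by omega) (by omega) P hP0 hPd z hz0 him
    rw [hP] at this
    have hle : realRank f (2 + n) ≤ 1 + n := Nat.sInf_le this
    omega
end
end

section
/- Let f be a real binary quartic with distinct roots (squarefree over ℂ). If f has four distinct real roots, then the real rank of f is 4. -/
open MvPolynomial

noncomputable section

lemma aux_cube (K L u v u' v' s t : ℝ) (hst : s ≠ t)
    (h1 : K * (u * s + v)^3 + L * (u' * s + v')^3 = 0)
    (h2 : K * (u * t + v)^3 + L * (u' * t + v')^3 = 0) (r : ℝ) :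
    K * (u * r + v)^3 + L * (u' * r + v')^3 = 0 := by
  have hodd : Odd 3 := by decide
  have hcr : ∀ z : ℝ, ∃ w : ℝ, w ^ 3 = z := by
    intro z
    rcases le_total 0 z with h | h
    · refine ⟨z ^ ((1:ℝ)/3), ?_⟩
      rw [← Real.rpow_natCast, ← Real.rpow_mul h]; norm_num
    · refine ⟨-((-z) ^ ((1:ℝ)/3)), ?_⟩
      rw [hodd.neg_pow, ← Real.rpow_natCast, ← Real.rpow_mul (by linarith)]; norm_num
  obtain ⟨k, rfl⟩ := hcr K
  obtain ⟨l, rfl⟩ := hcr L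
  have key : ∀ x y : ℝ, k^3 * x^3 + l^3 * y^3 = 0 → k * x + l * y = 0 := by
    intro x y h
    have : (k * x)^3 = (-(l * y))^3 := by rw [hodd.neg_pow]; linarith [mul_pow k x 3, mul_pow l y 3]
    have := hodd.strictMono_pow.injective this
    linarith
  have e1 := key _ _ h1
  have e2 := key _ _ h2
  have e3 : k * u + l * u' = 0 := by
    have : (k * u + l * u') * (s - t) = 0 := by linarith
    rcases mul_eq_zero.1 this with h | h
    · exact h
    · exact absurd (by linarith) hst
  have e4 : k * (u * r + v) = -(l * (u' * r + v')) := by linear_combination e1 + (r - s) * e3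
  have : (k * (u * r + v))^3 = (-(l * (u' * r + v')))^3 := by rw [e4]
  linear_combination this

lemma aux_rolle (c1 c2 c3 u v u' v' t1 t2 t3 : ℝ) (h12 : t1 < t2) (h23 : t2 < t3)
    (g : ℝ → ℝ) (hg : ∀ t, g t = c1 * (u * t + v)^4 + c2 * (u' * t + v')^4 + c3)
    (z1 : g t1 = 0) (z2 : g t2 = 0) (z3 : g t3 = 0) (r : ℝ) : g r = 0 := by
  have hd : ∀ t, HasDerivAt g (4 * ((c1 * u) * (u * t + v)^3 + (c2 * u') * (u' * t + v')^3)) t := by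
    intro t
    have e : g = fun t => c1 * (u * t + v)^4 + c2 * (u' * t + v')^4 + c3 := funext hg
    rw [e]
    have a1 : ∀ p q : ℝ, HasDerivAt (fun t : ℝ => p * t + q) p t := by
      intro p q
      simpa using ((hasDerivAt_id t).const_mul p).add_const q
    have := ((((a1 u v).pow 4).const_mul c1).add (((a1 u' v').pow 4).const_mul c2)).add_const c3
    refine HasDerivAt.congr_deriv this ?_
    norm_num
    ring
  have hc : Continuous g := continuous_iff_continuousAt.2 fun t => (hd t).continuousAt
  obtain ⟨s, hs, es⟩ := exists_hasDerivAt_eq_zero h12 hc.continuousOn (z1.trans z2.symm) (fun x _ => hd x)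
  obtain ⟨t, ht, et⟩ := exists_hasDerivAt_eq_zero h23 hc.continuousOn (z2.trans z3.symm) (fun x _ => hd x)
  have hst : s ≠ t := by
    have := hs.2; have := ht.1; intro h; linarith
  have hz : ∀ x, deriv g x = 0 := by
    intro x
    rw [(hd x).deriv, aux_cube (c1 * u) (c2 * u') u v u' v' s t hst (by linarith) (by linarith) x, mul_zero]
  rw [is_const_of_deriv_eq_zero (fun x => (hd x).differentiableAt) hz r t1, z1]

lemma aux_rolle' (c1 c2 c3 u v u' v' t1 t2 t3 : ℝ) (h12 : t1 ≠ t2) (h23 : t2 ≠ t3) (h13 : t1 ≠ t3)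
    (g : ℝ → ℝ) (hg : ∀ t, g t = c1 * (u * t + v)^4 + c2 * (u' * t + v')^4 + c3)
    (z1 : g t1 = 0) (z2 : g t2 = 0) (z3 : g t3 = 0) (r : ℝ) : g r = 0 := by
  have H := fun a b c x y => aux_rolle c1 c2 c3 u v u' v' a b c x y g hg
  rcases lt_or_gt_of_ne h12 with a | a <;> rcases lt_or_gt_of_ne h23 with b | b <;>
    rcases lt_or_gt_of_ne h13 with c | c
  · exact H t1 t2 t3 a b z1 z2 z3 r
  · linarith
  · exact H t1 t3 t2 c b z1 z3 z2 r
  · exact H t3 t1 t2 c a z3 z1 z2 r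
  · exact H t2 t1 t3 a c z2 z1 z3 r
  · exact H t2 t3 t1 b c z2 z3 z1 r
  · linarith
  · exact H t3 t2 t1 b a z3 z2 z1 r

lemma aux_three (c1 c2 c3 a1 b1 a2 b2 a3 b3 : ℝ) (h3 : (a3, b3) ≠ (0, 0))
    (F : ℝ → ℝ → ℝ)
    (hF : ∀ x y, F x y = c1 * (a1 * x + b1 * y)^4 + c2 * (a2 * x + b2 * y)^4 + c3 * (a3 * x + b3 * y)^4)
    (x1 y1 x2 y2 x3 y3 : ℝ) (d12 : x1 * y2 ≠ x2 * y1) (d23 : x2 * y3 ≠ x3 * y2)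
    (d13 : x1 * y3 ≠ x3 * y1) (z1 : F x1 y1 = 0) (z2 : F x2 y2 = 0) (z3 : F x3 y3 = 0)
    (n1 : a3 * x1 + b3 * y1 ≠ 0) (n2 : a3 * x2 + b3 * y2 ≠ 0) (n3 : a3 * x3 + b3 * y3 ≠ 0)
    (x y : ℝ) (n : a3 * x + b3 * y ≠ 0) : F x y = 0 := by
  have hN : a3^2 + b3^2 ≠ 0 := by
    intro h
    have ha : a3 = 0 := by nlinarith [sq_nonneg a3, sq_nonneg b3]
    have hb : b3 = 0 := by nlinarith [sq_nonneg a3, sq_nonneg b3]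
    exact h3 (by rw [ha, hb])
  set N := a3^2 + b3^2 with hNdef
  let g : ℝ → ℝ := fun t => c1 * ((b1 * a3 - a1 * b3) / N * t + (a1 * a3 + b1 * b3) / N)^4
    + c2 * ((b2 * a3 - a2 * b3) / N * t + (a2 * a3 + b2 * b3) / N)^4 + c3
  have hFg : ∀ x y, a3 * x + b3 * y ≠ 0 →
      F x y = (a3 * x + b3 * y)^4 * g ((a3 * y - b3 * x) / (a3 * x + b3 * y)) := by
    intro x y n
    have e : ∀ a b : ℝ, a * x + b * y = (a3 * x + b3 * y) * ((b * a3 - a * b3) / N *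
        ((a3 * y - b3 * x) / (a3 * x + b3 * y)) + (a * a3 + b * b3) / N) := by
      intro a b
      have hm : (a3 * x + b3 * y) * ((a3 * y - b3 * x) / (a3 * x + b3 * y)) = a3 * y - b3 * x :=
        mul_div_cancel₀ _ n
      generalize (a3 * y - b3 * x) / (a3 * x + b3 * y) = s at *
      field_simp
      rw [hNdef]; linear_combination (-(b * a3 - a * b3)) * hm
    rw [hF, e a1 b1, e a2 b2]
    simp only [g]
    ring
  have hz : ∀ x y, a3 * x + b3 * y ≠ 0 → F x y = 0 →
      g ((a3 * y - b3 * x) / (a3 * x + b3 * y)) = 0 := by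
    intro x y n h
    rw [hFg x y n] at h
    exact (mul_eq_zero.1 h).resolve_left (pow_ne_zero _ n)
  have hne : ∀ x y x' y', a3 * x + b3 * y ≠ 0 → a3 * x' + b3 * y' ≠ 0 → x * y' ≠ x' * y →
      (a3 * y - b3 * x) / (a3 * x + b3 * y) ≠ (a3 * y' - b3 * x') / (a3 * x' + b3 * y') := by
    intro x y x' y' n n' d h
    rw [div_eq_div_iff n n'] at h
    apply d
    have : N * (x * y' - x' * y) = 0 := by rw [hNdef]; linear_combination -h
    have := (mul_eq_zero.1 this).resolve_left hN
    linarith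
  rw [hFg x y n, aux_rolle' _ _ _ _ _ _ _ _ _ _ (hne _ _ _ _ n1 n2 d12) (hne _ _ _ _ n2 n3 d23)
    (hne _ _ _ _ n1 n3 d13) g (fun t => rfl) (hz _ _ n1 z1) (hz _ _ n2 z2) (hz _ _ n3 z3), mul_zero]

lemma eval_lin (a b : ℝ) (v : Fin 2 → ℝ) : eval v (lin a b) = a * v 0 + b * v 1 := by
  simp [lin]

lemma aux_lower (f : MvPolynomial (Fin 2) ℝ) (hf : f ≠ 0) (p : Fin 4 → Fin 2 → ℝ)
    (hp : ∀ i j, i ≠ j → p i 0 * p j 1 ≠ p j 0 * p i 1) (hz : ∀ i, eval (p i) f = 0)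
    (c1 c2 c3 a1 b1 a2 b2 a3 b3 : ℝ) (h3 : (a3, b3) ≠ (0, 0))
    (hF : f = C c1 * lin a1 b1 ^ 4 + C c2 * lin a2 b2 ^ 4 + C c3 * lin a3 b3 ^ 4) : False := by
  have hl : lin a3 b3 ≠ 0 := by
    intro h
    have e1 := congrArg (eval ![1, 0]) h
    have e2 := congrArg (eval ![0, 1]) h
    rw [eval_lin] at e1 e2
    simp at e1 e2
    exact h3 (by rw [e1, e2])
  have hthree : ∀ i j k : Fin 4, i ≠ j → j ≠ k → i ≠ k → a3 * p i 0 + b3 * p i 1 ≠ 0 →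
      a3 * p j 0 + b3 * p j 1 ≠ 0 → a3 * p k 0 + b3 * p k 1 ≠ 0 → False := by
    intro i j k hij hjk hik ni nj nk
    have ev : ∀ v : Fin 2 → ℝ, ![v 0, v 1] = v := by
      intro v; ext i; fin_cases i <;> rfl
    have := aux_three c1 c2 c3 a1 b1 a2 b2 a3 b3 h3 (fun x y => eval ![x, y] f)
      (by intro x y; simp only [hF]; simp [eval_lin]) _ _ _ _ _ _ (hp i j hij) (hp j k hjk) (hp i k hik)
      (by simp only [ev]; exact hz i) (by simp only [ev]; exact hz j) (by simp only [ev]; exact hz k)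
      ni nj nk
    apply mul_ne_zero hf hl
    apply MvPolynomial.funext
    intro v
    rw [map_mul, eval_lin, map_zero]
    by_cases h : a3 * v 0 + b3 * v 1 = 0
    · rw [h, mul_zero]
    · have := this _ _ h
      simp only [ev] at this
      rw [this, zero_mul]
  have hone : ∀ i j : Fin 4, i ≠ j → a3 * p i 0 + b3 * p i 1 = 0 → a3 * p j 0 + b3 * p j 1 ≠ 0 := by
    intro i j hij e1 e2
    have d := hp i j hij
    have d' : p i 0 * p j 1 - p j 0 * p i 1 ≠ 0 := sub_ne_zero.2 d
    have ha : a3 * (p i 0 * p j 1 - p j 0 * p i 1) = 0 := by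
      linear_combination p j 1 * e1 - p i 1 * e2
    have hb : b3 * (p i 0 * p j 1 - p j 0 * p i 1) = 0 := by
      linear_combination p i 0 * e2 - p j 0 * e1
    have ha := (mul_eq_zero.1 ha).resolve_right d'
    have hb := (mul_eq_zero.1 hb).resolve_right d'
    exact h3 (by rw [ha, hb])
  by_cases q0 : a3 * p 0 0 + b3 * p 0 1 = 0
  · exact hthree 1 2 3 (by decide) (by decide) (by decide) (hone 0 1 (by decide) q0)
      (hone 0 2 (by decide) q0) (hone 0 3 (by decide) q0)
  by_cases q1 : a3 * p 1 0 + b3 * p 1 1 = 0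
  · exact hthree 0 2 3 (by decide) (by decide) (by decide) q0
      (hone 1 2 (by decide) q1) (hone 1 3 (by decide) q1)
  by_cases q2 : a3 * p 2 0 + b3 * p 2 1 = 0
  · exact hthree 0 1 3 (by decide) (by decide) (by decide) q0 q1 (hone 2 3 (by decide) q2)
  exact hthree 0 1 2 (by decide) (by decide) (by decide) q0 q1 q2

lemma aux_rep (f : MvPolynomial (Fin 2) ℝ) (hf : f.IsHomogeneous 4) : ∃ a0 a1 a2 a3 a4 : ℝ,
    ∀ v, eval v f = a0 * v 0 ^ 4 + 4 * a1 * v 0 ^ 3 * v 1 + 6 * a2 * v 0 ^ 2 * v 1 ^ 2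
      + 4 * a3 * v 0 * v 1 ^ 3 + a4 * v 1 ^ 4 := by
  classical
  have key : f = ∑ q ∈ Finset.HasAntidiagonal.antidiagonal (4 : ℕ),
      monomial (Finsupp.single (0 : Fin 2) q.1 + Finsupp.single 1 q.2)
        (coeff (Finsupp.single (0 : Fin 2) q.1 + Finsupp.single 1 q.2) f) := by
    ext m
    have hm : Finsupp.single (0 : Fin 2) (m 0) + Finsupp.single 1 (m 1) = m := by
      ext i; fin_cases i <;> simp
    rw [coeff_sum]
    simp only [coeff_monomial]
    by_cases h : m 0 + m 1 = 4
    · rw [Finset.sum_eq_single (m 0, m 1)]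
      · simp [hm]
      · intro q _ hq
        rw [if_neg]
        intro e
        apply hq
        rw [← e]; simp
      · intro h'
        exact absurd (Finset.HasAntidiagonal.mem_antidiagonal.2 h) h'
    · have : coeff m f = 0 := by
        apply hf.coeff_eq_zero
        intro h'
        apply h
        rw [← h', Finsupp.degree_eq_sum]
        simp
      rw [this, Finset.sum_eq_zero]
      intro q hq
      rw [if_neg]
      intro e
      apply h
      rw [← e]
      simpa using hq
  let k : ℕ → ℕ → ℝ := fun i j => coeff (Finsupp.single (0 : Fin 2) i + Finsupp.single 1 j) f
  refine ⟨k 4 0, k 3 1 / 4, k 2 2 / 6, k 1 3 / 4, k 0 4, ?_⟩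
  intro v
  have hmon : ∀ (i j : ℕ) (r : ℝ), eval v (monomial (Finsupp.single (0 : Fin 2) i + Finsupp.single 1 j) r)
      = r * (v 0 ^ i * v 1 ^ j) := by
    intro i j r
    rw [eval_monomial, Finsupp.prod_add_index' (by simp) (by intros; rw [pow_add])]
    simp
  have e := congrArg (eval v) key
  rw [map_sum] at e
  simp only [hmon] at e
  rw [e, Finset.Nat.sum_antidiagonal_eq_sum_range_succ_mk]
  simp only [Finset.sum_range_succ, Finset.sum_range_zero, k]
  norm_num
  ring

lemma aux_exists (a0 a1 a2 a3 a4 : ℝ) (h : ¬ (a0 = 0 ∧ a1 = 0 ∧ a2 = 0 ∧ a3 = 0)) :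
    ∃ t : Fin 4 → ℝ, Function.Injective t ∧
      a4 - (t 0 + t 1 + t 2 + t 3) * a3
      + (t 0 * t 1 + t 0 * t 2 + t 0 * t 3 + t 1 * t 2 + t 1 * t 3 + t 2 * t 3) * a2
      - (t 0 * t 1 * t 2 + t 0 * t 1 * t 3 + t 0 * t 2 * t 3 + t 1 * t 2 * t 3) * a1
      + t 0 * t 1 * t 2 * t 3 * a0 = 0 := by
  let x : Fin 3 → MvPolynomial (Fin 3) ℝ := X
  let A : MvPolynomial (Fin 3) ℝ := C a4 - (x 0 + x 1 + x 2) * C a3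
    + (x 0 * x 1 + x 0 * x 2 + x 1 * x 2) * C a2 - x 0 * x 1 * x 2 * C a1
  let B : MvPolynomial (Fin 3) ℝ := C a3 - (x 0 + x 1 + x 2) * C a2
    + (x 0 * x 1 + x 0 * x 2 + x 1 * x 2) * C a1 - x 0 * x 1 * x 2 * C a0
  have eA : ∀ v, eval v A = a4 - (v 0 + v 1 + v 2) * a3
    + (v 0 * v 1 + v 0 * v 2 + v 1 * v 2) * a2 - v 0 * v 1 * v 2 * a1 := by
    intro v; simp [A, x]
  have eB : ∀ v, eval v B = a3 - (v 0 + v 1 + v 2) * a2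
    + (v 0 * v 1 + v 0 * v 2 + v 1 * v 2) * a1 - v 0 * v 1 * v 2 * a0 := by
    intro v; simp [B, x]
  have hB : B ≠ 0 := by
    intro hB
    have e : ∀ u v w : ℝ, _ := fun u v w => (eB ![u, v, w]).symm.trans (by rw [hB, map_zero])
    have e1 := e 0 0 0
    have e2 := e 1 0 0
    have e3 := e 1 1 0
    have e4 := e 1 1 1
    simp at e1 e2 e3 e4
    exact h ⟨by linarith, by linarith, by linarith, by linarith⟩
  have hD : ∀ i, A - x i * B ≠ 0 := by
    intro i hA
    have e : ∀ u v w : ℝ, eval ![u, v, w] A - ![u, v, w] i * eval ![u, v, w] B = 0 := by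
      intro u v w
      have := congrArg (eval ![u, v, w]) hA
      simpa [x] using this
    simp only [eA, eB] at e
    have e1 := e 0 0 0
    have e2 := e 1 0 0
    have e2' := e 0 1 0
    have e3 := e 1 1 0
    have e3' := e 0 1 1
    have e4 := e 1 1 1
    fin_cases i <;> simp at e1 e2 e2' e3 e3' e4 <;>
    exact h ⟨by linarith, by linarith, by linarith, by linarith⟩
  have hx : ∀ i j, i ≠ j → x i - x j ≠ 0 := by
    intro i j hij
    exact sub_ne_zero.2 (fun h => hij (X_injective h))
  have hP : B * (A - x 0 * B) * (A - x 1 * B) * (A - x 2 * B) * (x 0 - x 1) * (x 0 - x 2) * (x 1 - x 2) ≠ 0 := by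
    have := hx 0 1 (by decide)
    have := hx 0 2 (by decide)
    have := hx 1 2 (by decide)
    simp only [mul_ne_zero_iff]
    simp [*]
  obtain ⟨v, hv⟩ : ∃ v, eval v (B * (A - x 0 * B) * (A - x 1 * B) * (A - x 2 * B) * (x 0 - x 1) * (x 0 - x 2) * (x 1 - x 2)) ≠ 0 := by
    by_contra hc
    push Not at hc
    exact hP (MvPolynomial.funext (by simpa using hc))
  simp only [map_mul, map_sub, mul_ne_zero_iff, x, eval_X] at hv
  obtain ⟨⟨⟨⟨⟨⟨hb, h0⟩, h1⟩, h2⟩, h01⟩, h02⟩, h12⟩ := hv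
  have hs : ∀ s : ℝ, eval v A - s * eval v B ≠ 0 → s ≠ eval v A / eval v B := by
    intro s hs e
    apply hs
    rw [e]; field_simp; ring
  have h0 := hs _ h0
  have h1 := hs _ h1
  have h2 := hs _ h2
  rw [sub_ne_zero] at h01 h02 h12
  have hlast : eval v A - (eval v A / eval v B) * eval v B = 0 := by field_simp; ring
  generalize eval v A / eval v B = s at *
  refine ⟨![v 0, v 1, v 2, s], ?_, ?_⟩
  · intro i j hij
    fin_cases i <;> fin_cases j <;> simp at hij ⊢ <;> first | exact absurd hij (by assumption) | exact absurd hij.symm (by assumption)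
  · rw [eA, eB] at hlast
    simp
    linear_combination hlast

lemma aux_solve (a : Fin 4 → ℝ) (t : Fin 4 → ℝ) (ht : Function.Injective t) :
    ∃ c : Fin 4 → ℝ, ∀ k : Fin 4, ∑ j, c j * t j ^ (k : ℕ) = a k := by
  have hd : (Matrix.vandermonde t).det ≠ 0 := Matrix.det_vandermonde_ne_zero_iff.2 ht
  have hu : IsUnit (Matrix.vandermonde t) := (Matrix.isUnit_iff_isUnit_det _).2 hd.isUnit
  obtain ⟨c, hc⟩ := (Matrix.vecMul_surjective_iff_isUnit.2 hu) a
  refine ⟨c, fun k => ?_⟩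
  rw [← hc]
  simp [Matrix.vecMul, dotProduct, Matrix.vandermonde_apply]

lemma aux_upper (f : MvPolynomial (Fin 2) ℝ) (a0 a1 a2 a3 a4 : ℝ)
    (hf : ∀ v, eval v f = a0 * v 0 ^ 4 + 4 * a1 * v 0 ^ 3 * v 1 + 6 * a2 * v 0 ^ 2 * v 1 ^ 2
      + 4 * a3 * v 0 * v 1 ^ 3 + a4 * v 1 ^ 4)
    (h : ¬ (a0 = 0 ∧ a1 = 0 ∧ a2 = 0 ∧ a3 = 0)) : HasDecomp f 4 4 := by
  obtain ⟨t, ht, e⟩ := aux_exists a0 a1 a2 a3 a4 h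
  obtain ⟨c, hc⟩ := aux_solve ![a0, a1, a2, a3] t ht
  have k0 := hc 0
  have k1 := hc 1
  have k2 := hc 2
  have k3 := hc 3
  simp [Fin.sum_univ_four] at k0 k1 k2 k3
  refine ⟨c, fun _ => 1, t, by simp, ?_⟩
  have h4 : a4 = c 0 * t 0 ^ 4 + c 1 * t 1 ^ 4 + c 2 * t 2 ^ 4 + c 3 * t 3 ^ 4 := by
    rw [← k0, ← k1, ← k2, ← k3] at e
    linear_combination e
  apply MvPolynomial.funext
  intro v
  rw [hf, h4, ← k0, ← k1, ← k2, ← k3]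
  simp only [Fin.sum_univ_four, map_add, map_mul, map_pow, eval_C, eval_lin]
  ring

lemma aux_points (f : MvPolynomial (Fin 2) ℝ) (hroots : (projRoots f).ncard = 4) :
    ∃ p : Fin 4 → Fin 2 → ℝ, (∀ i j, i ≠ j → p i 0 * p j 1 ≠ p j 0 * p i 1) ∧
      ∀ i, eval (p i) f = 0 := by
  have hfin : (projRoots f).Finite := Set.finite_of_ncard_ne_zero (by omega)
  have : Finite (projRoots f) := hfin
  have hcard : Nat.card (projRoots f) = 4 := hroots
  let e := (Finite.equivFinOfCardEq hcard).symm
  refine ⟨fun i => (e i).1.rep, ?_, fun i => (e i).2⟩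
  intro i j hij hd
  simp only at hd
  apply hij
  apply e.injective
  apply Subtype.ext
  generalize (e i).1 = P at *
  generalize (e j).1 = Q at *
  have hP := P.rep_nonzero
  have hQ := Q.rep_nonzero
  rw [← P.mk_rep, ← Q.mk_rep, Projectivization.mk_eq_mk_iff']
  generalize P.rep = u at *
  generalize Q.rep = w at *
  by_cases h0 : w 0 = 0
  · have h1 : w 1 ≠ 0 := by
      intro h1; apply hQ; ext k; fin_cases k <;> simp [h0, h1]
    have hu : u 0 = 0 := by
      rw [h0, zero_mul] at hd; exact (mul_eq_zero.1 hd).resolve_right h1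
    refine ⟨u 1 / w 1, ?_⟩
    ext k; fin_cases k
    · simp [h0, hu]
    · simp [h1]
  · refine ⟨u 0 / w 0, ?_⟩
    ext k; fin_cases k
    · simp [h0]
    · simp; field_simp; linarith

/-- a real binary quartic with distinct complex roots and four distinct
real roots has real rank 4. -/
theorem stmt11 (f : MvPolynomial (Fin 2) ℝ) (hf : f.IsHomogeneous 4)
    (hsf : SquarefreeC f) (hroots : (projRoots f).ncard = 4) :
    realRank f 4 = 4 := by
  have hne : f ≠ 0 := by
    rintro rfl
    unfold SquarefreeC at hsf
    rw [map_zero] at hsf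
    exact not_squarefree_zero hsf
  obtain ⟨p, hp, hz⟩ := aux_points f hroots
  obtain ⟨a0, a1, a2, a3, a4, hev⟩ := aux_rep f hf
  have hup : HasDecomp f 4 4 := by
    apply aux_upper f a0 a1 a2 a3 a4 hev
    rintro ⟨rfl, rfl, rfl, rfl⟩
    have h4 : a4 ≠ 0 := by
      rintro rfl
      exact hne (MvPolynomial.funext fun v => by rw [hev]; simp)
    have hy : ∀ i, p i 1 = 0 := by
      intro i
      have := hz i
      rw [hev] at this
      simpa [h4] using this
    exact hp 0 1 (by decide) (by rw [hy, hy]; simp)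
  apply le_antisymm (Nat.sInf_le hup)
  apply le_csInf ⟨4, hup⟩
  rintro r ⟨c, a, b, hab, hdec⟩
  by_contra hr
  have L := aux_lower f hne p hp hz
  have hr : r < 4 := by omega
  interval_cases r
  · exact L 0 0 0 0 0 0 0 1 0 (by simp) (by rw [hdec]; simp)
  · exact L (c 0) 0 0 (a 0) (b 0) 0 0 1 0 (by simp) (by rw [hdec]; simp)
  · exact L (c 0) (c 1) 0 (a 0) (b 0) (a 1) (b 1) 1 0 (by simp) (by rw [hdec]; simp [Fin.sum_univ_two])
  · exact L (c 0) (c 1) (c 2) (a 0) (b 0) (a 1) (b 1) (a 2) (b 2) (hab 2)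
      (by rw [hdec]; simp [Fin.sum_univ_three])
end
end

section
/- Identify real binary quartics f = a₀x⁴ + 4a₁x³y + 6a₂x²y² + 4a₃xy³ + a₄y⁴ with their coefficient vectors (a₀,a₁,a₂,a₃,a₄) ∈ ℝ⁵, and for each r let S_{4,r} ⊆ ℝ⁵ be the set of nonzero quartics of real rank exactly r. Then S_{4,r} has nonempty interior in ℝ⁵ if and only if r = 3 or r = 4. -/
open MvPolynomial

noncomputable section

def QF (a : Fin 5 → ℝ) : MvPolynomial (Fin 2) ℝ :=
  ∑ i : Fin 5, C ((Nat.choose 4 (i : ℕ) : ℝ) * a i) * X 0 ^ (4 - (i : ℕ)) * X 1 ^ (i : ℕ)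

def QN (a : Fin 5 → ℝ) : MvPolynomial ℕ ℝ :=
  ∑ i : Fin 5, C ((Nat.choose 4 (i : ℕ) : ℝ) * a i) * X 0 ^ (4 - (i : ℕ)) * X 1 ^ (i : ℕ)

lemma QN_ne {a : Fin 5 → ℝ} (h : QF a ≠ 0) : QN a ≠ 0 := by
  have e : QN a = rename (Fin.val : Fin 2 → ℕ) (QF a) := by
    simp only [QN, QF, map_sum, map_mul, map_pow, rename_X, rename_C]
    rfl
  rw [e]
  intro h0
  exact h (rename_injective _ Fin.val_injective (by rw [h0, map_zero]))

lemma QF_eval (a : Fin 5 → ℝ) (x y : ℝ) : eval ![x, y] (QF a) =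
    a 0 * x ^ 4 + 4 * a 1 * x ^ 3 * y + 6 * a 2 * x ^ 2 * y ^ 2 + 4 * a 3 * x * y ^ 3
      + a 4 * y ^ 4 := by
  have h2 : Nat.choose 4 2 = 6 := rfl
  have h3 : Nat.choose 4 3 = 4 := rfl
  simp [QF, Fin.sum_univ_succ, h2, h3]
  ring

lemma QF_inj {a b : Fin 5 → ℝ} (h : QF a = QF b) : a = b := by
  have H : ∀ x y : ℝ, _ := fun x y => (QF_eval a x y).symm.trans ((congrArg _ h).trans (QF_eval b x y))
  have h1 := H 1 0
  have h2 := H 0 1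
  have h3 := H 1 1
  have h4 := H 1 (-1)
  have h5 := H 1 2
  norm_num at h1 h2 h3 h4 h5
  ext i
  fin_cases i <;> simp <;> linarith

lemma QF_moment {r : ℕ} (c α β : Fin r → ℝ) :
    QF (fun i => ∑ j, c j * α j ^ (4 - (i : ℕ)) * β j ^ (i : ℕ)) =
      ∑ j, C (c j) * lin (α j) (β j) ^ 4 := by
  have h2 : Nat.choose 4 2 = 6 := rfl
  have h3 : Nat.choose 4 3 = 4 := rfl
  unfold QF
  simp only [map_mul, map_sum, Finset.mul_sum, Finset.sum_mul]
  rw [Finset.sum_comm]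
  refine Finset.sum_congr rfl fun j _ => ?_
  simp [Fin.sum_univ_succ, h2, h3, lin]
  ring

lemma decomp_iff (a : Fin 5 → ℝ) (r : ℕ) : HasDecomp (QF a) 4 r ↔
    ∃ c α β : Fin r → ℝ, (∀ j, (α j, β j) ≠ (0, 0)) ∧
      ∀ i : Fin 5, a i = ∑ j, c j * α j ^ (4 - (i : ℕ)) * β j ^ (i : ℕ) := by
  constructor
  · rintro ⟨c, α, β, h, e⟩
    refine ⟨c, α, β, h, ?_⟩
    rw [← QF_moment] at e
    exact fun i => congrFun (QF_inj e) i
  · rintro ⟨c, α, β, h, e⟩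
    refine ⟨c, α, β, h, ?_⟩
    rw [← QF_moment, ← funext e]

lemma decomp_succ {f : MvPolynomial (Fin 2) ℝ} {d r : ℕ} (h : HasDecomp f d r) :
    HasDecomp f d (r + 1) := by
  obtain ⟨c, α, β, h, e⟩ := h
  refine ⟨Fin.cons 0 c, Fin.cons 1 α, Fin.cons 0 β, ?_, ?_⟩
  · intro j
    refine Fin.cases ?_ ?_ j
    · simp
    · intro i; simpa using h i
  · simp [Fin.sum_univ_succ, e]

lemma decomp_mono {f : MvPolynomial (Fin 2) ℝ} {d r s : ℕ} (hrs : r ≤ s) (h : HasDecomp f d r) :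
    HasDecomp f d s := by
  induction hrs with
  | refl => exact h
  | step _ ih => exact decomp_succ ih

def hdet (a : Fin 5 → ℝ) : ℝ :=
  a 0 * (a 2 * a 4 - a 3 ^ 2) - a 1 * (a 1 * a 4 - a 2 * a 3) + a 2 * (a 1 * a 3 - a 2 ^ 2)

lemma hdet_of_two {a : Fin 5 → ℝ} (h : HasDecomp (QF a) 4 2) : hdet a = 0 := by
  obtain ⟨c, α, β, -, e⟩ := (decomp_iff a 2).1 h
  simp only [hdet, e, Fin.sum_univ_two]
  simp
  ring

lemma decomp_four {a : Fin 5 → ℝ} (h1 : a 1 - a 2 ≠ 0) (h2 : a 2 - a 3 ≠ 0)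
    (h3 : a 1 + a 3 - 2 * a 2 ≠ 0) : HasDecomp (QF a) 4 4 := by
  rw [decomp_iff]
  obtain ⟨p, hp⟩ : ∃ p, p = a 1 - a 2 := ⟨_, rfl⟩
  obtain ⟨q, hq⟩ : ∃ q, q = a 2 - a 3 := ⟨_, rfl⟩
  have e1 : a 1 = a 2 + p := by linarith
  have e3 : a 3 = a 2 - q := by linarith
  have hp0 : p ≠ 0 := hp ▸ h1
  have hq0 : q ≠ 0 := hq ▸ h2
  have hpq : p - q ≠ 0 := by
    intro h; apply h3; linarith
  -- c : coefficient of (x+y)^4, k : coefficient of (x+ty)^4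
  let t := q / p
  let c := a 2 - p * q / (p - q)
  let k := p ^ 3 / (q * (p - q))
  refine ⟨![a 0 - c - k, a 4 - c - k * t ^ 4, c, k], ![1, 0, 1, 1], ![0, 1, 1, t], ?_, ?_⟩
  · intro j; fin_cases j <;> simp
  · intro i
    fin_cases i <;> simp [Fin.sum_univ_four, e1, e3, t, c, k] <;> field_simp <;> ring

lemma decomp_three {a : Fin 5 → ℝ} (hp : a 1 * a 3 - a 2 ^ 2 ≠ 0) (hw : a 2 * a 4 - a 3 ^ 2 ≠ 0)
    (hd : 0 < (a 1 * a 4 - a 2 * a 3) ^ 2 - 4 * (a 1 * a 3 - a 2 ^ 2) * (a 2 * a 4 - a 3 ^ 2)) :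
    HasDecomp (QF a) 4 3 := by
  rw [decomp_iff]
  obtain ⟨p, hp'⟩ : ∃ p, p = a 1 * a 3 - a 2 ^ 2 := ⟨_, rfl⟩
  obtain ⟨w, hw'⟩ : ∃ w, w = a 2 * a 4 - a 3 ^ 2 := ⟨_, rfl⟩
  obtain ⟨q, hq'⟩ : ∃ q, q = a 1 * a 4 - a 2 * a 3 := ⟨_, rfl⟩
  rw [← hp'] at hp hd
  rw [← hw'] at hw hd
  rw [← hq'] at hd
  obtain ⟨D, hD, hDD⟩ : ∃ D : ℝ, 0 < D ∧ D ^ 2 = q ^ 2 - 4 * p * w :=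
    ⟨_, Real.sqrt_pos.2 hd, Real.sq_sqrt hd.le⟩
  obtain ⟨t, ht⟩ : ∃ t, t = (q + D) / (2 * p) := ⟨_, rfl⟩
  obtain ⟨s, hs⟩ : ∃ s, s = (q - D) / (2 * p) := ⟨_, rfl⟩
  have hts : p * (t + s) = q := by rw [ht, hs]; field_simp; ring
  have hts2 : p * (t * s) = w := by
    rw [ht, hs]; field_simp; linear_combination -hDD
  have htsne : t - s ≠ 0 := by
    have : t - s = D / p := by rw [ht, hs]; field_simp; ring
    rw [this]; exact div_ne_zero hD.ne' hp
  have hst : s - t ≠ 0 := by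
    intro h; apply htsne; linarith
  have ht0 : t ≠ 0 := by rintro rfl; apply hw; rw [← hts2]; ring
  have hs0 : s ≠ 0 := by rintro rfl; apply hw; rw [← hts2]; ring
  have r3 : a 3 = (t + s) * a 2 - t * s * a 1 := by
    apply mul_left_cancel₀ hp
    linear_combination (a 2) * (-hts) + (a 1) * hts2 + a 3 * hp' - a 2 * hq' + a 1 * hw'
  have r4 : a 4 = (t + s) * a 3 - t * s * a 2 := by
    apply mul_left_cancel₀ hp
    linear_combination (a 3) * (-hts) + (a 2) * hts2 + a 4 * hp' - a 3 * hq' + a 2 * hw'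
  let k := (a 2 - s * a 1) / (t * (t - s))
  let l := (a 2 - t * a 1) / (s * (s - t))
  have g1 : a 1 = k * t + l * s := by
    simp only [k, l]
    have : s - t = -(t - s) := by ring
    rw [this]
    field_simp
    ring
  have g2 : a 2 = k * t ^ 2 + l * s ^ 2 := by
    simp only [k, l]
    have : s - t = -(t - s) := by ring
    rw [this]
    field_simp
    ring
  have g3 : a 3 = k * t ^ 3 + l * s ^ 3 := by
    linear_combination r3 + (t + s) * g2 - t * s * g1
  have g4 : a 4 = k * t ^ 4 + l * s ^ 4 := by
    linear_combination r4 + (t + s) * g3 - t * s * g2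
  refine ⟨![a 0 - k - l, k, l], ![1, 1, 1], ![0, t, s], ?_, ?_⟩
  · intro j; fin_cases j <;> simp
  · intro i
    fin_cases i
    · simp [Fin.sum_univ_three]; ring
    · simpa [Fin.sum_univ_three] using g1
    · simpa [Fin.sum_univ_three] using g2
    · simpa [Fin.sum_univ_three] using g3
    · simpa [Fin.sum_univ_three] using g4

lemma cs_small (b0 b1 b2 b3 d0 d1 d2 d3 : ℝ) (h0 : |d0| < 1 / 100) (h1 : |d1| < 1 / 100)
    (h2 : |d2| < 1 / 100) (h3 : |d3| < 1 / 100) :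
    (b0 * d0 + b1 * d1 + b2 * d2 + b3 * d3) ^ 2 ≤
      (b0 ^ 2 + b1 ^ 2 + b2 ^ 2 + b3 ^ 2) * (1 / 1000) := by
  have key : ∀ d : ℝ, |d| < 1 / 100 → d ^ 2 ≤ 1 / 10000 := by
    intro d hd
    have := abs_lt.1 hd
    nlinarith
  have := key _ h0
  have := key _ h1
  have := key _ h2
  have := key _ h3
  have hN : 0 ≤ b0 ^ 2 + b1 ^ 2 + b2 ^ 2 + b3 ^ 2 := by positivity
  calc (b0 * d0 + b1 * d1 + b2 * d2 + b3 * d3) ^ 2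
      ≤ (b0 ^ 2 + b1 ^ 2 + b2 ^ 2 + b3 ^ 2) * (d0 ^ 2 + d1 ^ 2 + d2 ^ 2 + d3 ^ 2) := by
        nlinarith [sq_nonneg (b0 * d1 - b1 * d0), sq_nonneg (b0 * d2 - b2 * d0),
          sq_nonneg (b0 * d3 - b3 * d0), sq_nonneg (b1 * d2 - b2 * d1),
          sq_nonneg (b1 * d3 - b3 * d1), sq_nonneg (b2 * d3 - b3 * d2)]
    _ ≤ _ := mul_le_mul_of_nonneg_left (by linarith) hN

lemma not_three {a : Fin 5 → ℝ} (h0 : |a 0 + 1| < 1 / 100) (h1 : |a 1| < 1 / 100)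
    (h2 : |a 2 - 1| < 1 / 100) (h3 : |a 3| < 1 / 100) (h4 : |a 4 + 1| < 1 / 100) :
    ¬ HasDecomp (QF a) 4 3 := by
  rw [decomp_iff]
  rintro ⟨c, α, β, hne, e⟩
  have e0 := e 0
  have e1 := e 1
  have e2 := e 2
  have e3 := e 3
  have e4 := e 4
  simp [Fin.sum_univ_three] at e0 e1 e2 e3 e4
  have n0 := hne 0
  have n1 := hne 1
  have n2 := hne 2
  generalize α 0 = x at *
  generalize α 1 = y at *
  generalize α 2 = z at *
  generalize β 0 = u at *
  generalize β 1 = v at *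
  generalize β 2 = w at *
  obtain ⟨b0, hb0⟩ : ∃ b, b = u * v * w := ⟨_, rfl⟩
  obtain ⟨b1, hb1⟩ : ∃ b, b = -(x * v * w + u * y * w + u * v * z) := ⟨_, rfl⟩
  obtain ⟨b2, hb2⟩ : ∃ b, b = x * y * w + x * v * z + u * y * z := ⟨_, rfl⟩
  obtain ⟨b3, hb3⟩ : ∃ b, b = -(x * y * z) := ⟨_, rfl⟩
  have k1 : b0 * a 0 + b1 * a 1 + b2 * a 2 + b3 * a 3 = 0 := by
    rw [e0, e1, e2, e3, hb0, hb1, hb2, hb3]; ring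
  have k2 : b0 * a 1 + b1 * a 2 + b2 * a 3 + b3 * a 4 = 0 := by
    rw [e4, e1, e2, e3, hb0, hb1, hb2, hb3]; ring
  have q1 : 3 * (b0 * b2) ≤ b1 ^ 2 := by
    rw [hb0, hb1, hb2]
    nlinarith [sq_nonneg (x * v * w - u * y * w), sq_nonneg (x * v * w - u * v * z),
      sq_nonneg (u * y * w - u * v * z)]
  have q2 : 3 * (b1 * b3) ≤ b2 ^ 2 := by
    rw [hb3, hb1, hb2]
    nlinarith [sq_nonneg (x * y * w - x * v * z), sq_nonneg (x * y * w - u * y * z),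
      sq_nonneg (x * v * z - u * y * z)]
  have c1 := cs_small b0 b1 b2 b3 _ _ _ _ h0 h1 h2 h3
  have c2 := cs_small b0 b1 b2 b3 _ _ _ _ h1 h2 h3 h4
  have c1' : b0 * (a 0 + 1) + b1 * a 1 + b2 * (a 2 - 1) + b3 * a 3 = b0 - b2 := by
    linear_combination k1
  have c2' : b0 * a 1 + b1 * (a 2 - 1) + b2 * a 3 + b3 * (a 4 + 1) = b3 - b1 := by
    linear_combination k2
  rw [c1'] at c1
  rw [c2'] at c2
  have hN : b0 ^ 2 + b1 ^ 2 + b2 ^ 2 + b3 ^ 2 ≤ 0 := by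
    have t1 : (b0 - b2) ^ 2 = b0 ^ 2 + b2 ^ 2 - 2 * (b0 * b2) := by ring
    have t2 : (b3 - b1) ^ 2 = b1 ^ 2 + b3 ^ 2 - 2 * (b1 * b3) := by ring
    rw [t1] at c1
    rw [t2] at c2
    linarith [sq_nonneg b0, sq_nonneg b1, sq_nonneg b2, sq_nonneg b3]
  have s0 := sq_nonneg b0
  have s1 := sq_nonneg b1
  have s2 := sq_nonneg b2
  have s3 := sq_nonneg b3
  have z0 : b0 = 0 := pow_eq_zero_iff (two_ne_zero) |>.1 (by linarith : b0 ^ 2 = 0)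
  have z1 : b1 = 0 := pow_eq_zero_iff (two_ne_zero) |>.1 (by linarith : b1 ^ 2 = 0)
  have z2 : b2 = 0 := pow_eq_zero_iff (two_ne_zero) |>.1 (by linarith : b2 ^ 2 = 0)
  have z3 : b3 = 0 := pow_eq_zero_iff (two_ne_zero) |>.1 (by linarith : b3 ^ 2 = 0)
  clear s0 s1 s2 s3
  simp only [ne_eq, Prod.mk.injEq] at n0 n1 n2
  clear c1 c2 c1' c2' k1 k2 q1 q2 hN e0 e1 e2 e3 e4 h0 h1 h2 h3 h4 e hne
  rw [z0] at hb0
  rw [z1] at hb1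
  rw [z2] at hb2
  rw [z3] at hb3
  clear z0 z1 z2 z3
  grind

lemma rank_ne_zero {a : Fin 5 → ℝ} (h : realRank (QF a) 4 ≠ 0) : QF a ≠ 0 := by
  intro h0
  apply h
  apply Nat.le_zero.1
  apply Nat.sInf_le
  exact ⟨0, 0, 0, fun j => j.elim0, by simp [h0]⟩

lemma rank_eq {a : Fin 5 → ℝ} {r : ℕ} (h : HasDecomp (QF a) 4 (r + 1))
    (h' : ¬ HasDecomp (QF a) 4 r) : realRank (QF a) 4 = r + 1 := by
  have hle : realRank (QF a) 4 ≤ r + 1 := Nat.sInf_le h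
  apply le_antisymm hle
  by_contra hlt
  have hm : HasDecomp (QF a) 4 (realRank (QF a) 4) :=
    Nat.sInf_mem (s := {r | HasDecomp (QF a) 4 r}) ⟨_, h⟩
  exact h' (decomp_mono (by omega) hm)

lemma exists_generic {U : Set (Fin 5 → ℝ)} (hU : IsOpen U) (hne : U.Nonempty) :
    ∃ a ∈ U, a 1 - a 2 ≠ 0 ∧ a 2 - a 3 ≠ 0 ∧ a 1 + a 3 - 2 * a 2 ≠ 0 ∧ hdet a ≠ 0 := by
  obtain ⟨a, ha⟩ := hne
  let g : ℝ → Fin 5 → ℝ := fun s => ![a 0, a 1, a 2 + s, a 3 + 3 * s, a 4]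
  have hg : Continuous g := by
    refine continuous_pi fun i => ?_
    fin_cases i <;> simp [g] <;> fun_prop
  have hg0 : g 0 = a := by
    ext i; fin_cases i <;> simp [g]
  let p : Polynomial ℝ :=
    .C (a 0) * ((.C (a 2) + .X) * .C (a 4) - (.C (a 3) + .C 3 * .X) ^ 2) -
    .C (a 1) * (.C (a 1) * .C (a 4) - (.C (a 2) + .X) * (.C (a 3) + .C 3 * .X)) +
    (.C (a 2) + .X) * (.C (a 1) * (.C (a 3) + .C 3 * .X) - (.C (a 2) + .X) ^ 2)
  have hp : ∀ s, p.eval s = hdet (g s) := by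
    intro s; simp [p, hdet, g]
  have hp0 : p ≠ 0 := by
    intro h
    have E0 := hp 0
    have E1 := hp 1
    have E2 := hp 2
    have E3 := hp 3
    rw [h] at E0 E1 E2 E3
    simp [hdet, g] at E0 E1 E2 E3
    have : (6 : ℝ) = 0 := by linear_combination E3 - 3 * E2 + 3 * E1 - E0
    norm_num at this
  have hfin : ((p.roots.toFinset : Set ℝ) ∪ {a 1 - a 2, (a 2 - a 3) / 2, -(a 1 + a 3 - 2 * a 2)}).Finite :=
    (Finset.finite_toSet _).union (by simp)
  have hd := hfin.countable.dense_compl ℝ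
  obtain ⟨s, hs, hsU⟩ := hd.exists_mem_open (hU.preimage hg) ⟨0, by simpa [hg0] using ha⟩
  simp [hp0] at hs
  obtain ⟨hs2, hs3, hs4, hs1⟩ := hs
  refine ⟨g s, hsU, ?_, ?_, ?_, ?_⟩
  · simp [g]; intro h; apply hs2; linarith
  · simp [g]; intro h; apply hs3; linarith
  · simp [g]; intro h; apply hs4; linarith
  · rw [← hp]; exact hs1

/-- identifying real binary quartics with coefficient vectors in `ℝ⁵`,
the set of quartics of real rank exactly `r` has nonempty interior iff `r = 3` or `r = 4`. -/
theorem stmt13 (r : ℕ) :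
    (interior {a : Fin 5 → ℝ |
        (∑ i : Fin 5, C ((Nat.choose 4 (i : ℕ) : ℝ) * a i) *
          X 0 ^ (4 - (i : ℕ)) * X 1 ^ (i : ℕ)) ≠ 0 ∧
        realRank (∑ i : Fin 5, C ((Nat.choose 4 (i : ℕ) : ℝ) * a i) *
          X 0 ^ (4 - (i : ℕ)) * X 1 ^ (i : ℕ)) 4 = r}).Nonempty ↔
      r = 3 ∨ r = 4 := by
  change (interior {a : Fin 5 → ℝ | QN a ≠ 0 ∧ realRank (QF a) 4 = r}).Nonempty ↔ r = 3 ∨ r = 4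
  constructor
  · intro h
    obtain ⟨a, haU, h1, h2, h3, h4⟩ := exists_generic isOpen_interior h
    obtain ⟨-, hr⟩ := interior_subset haU
    have hd := decomp_four h1 h2 h3
    have hle : realRank (QF a) 4 ≤ 4 := Nat.sInf_le hd
    have hm : HasDecomp (QF a) 4 (realRank (QF a) 4) :=
      Nat.sInf_mem (s := {r | HasDecomp (QF a) 4 r}) ⟨_, hd⟩
    have : ¬ realRank (QF a) 4 ≤ 2 := fun hle2 => h4 (hdet_of_two (decomp_mono hle2 hm))
    omega
  · rintro (rfl | rfl)
    · refine ⟨![3, 3, 5, 9, 17], mem_interior.2 ⟨{a | a 1 * a 3 - a 2 ^ 2 ≠ 0} ∩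
        {a | a 2 * a 4 - a 3 ^ 2 ≠ 0} ∩ {a | 0 < (a 1 * a 4 - a 2 * a 3) ^ 2 -
          4 * (a 1 * a 3 - a 2 ^ 2) * (a 2 * a 4 - a 3 ^ 2)} ∩ {a | hdet a ≠ 0}, ?_, ?_, ?_⟩⟩
      · rintro a ⟨⟨⟨h1, h2⟩, h3⟩, h4⟩
        have := rank_eq (r := 2) (decomp_three h1 h2 h3) (fun h => h4 (hdet_of_two h))
        exact ⟨QN_ne (rank_ne_zero (by omega)), this⟩
      · refine ((IsOpen.inter ?_ ?_).inter ?_).inter ?_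
        · exact isOpen_ne_fun (by fun_prop) (by fun_prop)
        · exact isOpen_ne_fun (by fun_prop) (by fun_prop)
        · exact isOpen_lt (by fun_prop) (by fun_prop)
        · exact isOpen_ne_fun (by unfold hdet; fun_prop) (by fun_prop)
      · refine ⟨⟨⟨?_, ?_⟩, ?_⟩, ?_⟩ <;> simp [hdet] <;> norm_num
    · refine ⟨![-1, 0, 1, 0, -1], mem_interior.2 ⟨{a | |a 0 + 1| < 1 / 100} ∩ {a | |a 1| < 1 / 100} ∩
        {a | |a 2 - 1| < 1 / 100} ∩ {a | |a 3| < 1 / 100} ∩ {a | |a 4 + 1| < 1 / 100}, ?_, ?_, ?_⟩⟩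
      · rintro a ⟨⟨⟨⟨h0, h1⟩, h2⟩, h3⟩, h4⟩
        rw [Set.mem_setOf_eq] at h0 h1 h2 h3 h4
        have g1 := abs_lt.1 h1
        have g2 := abs_lt.1 h2
        have g3 := abs_lt.1 h3
        have := rank_eq (r := 3) (decomp_four (a := a) (by intro h; linarith) (by intro h; linarith)
          (by intro h; linarith)) (not_three h0 h1 h2 h3 h4)
        exact ⟨QN_ne (rank_ne_zero (by omega)), this⟩
      · refine (((IsOpen.inter ?_ ?_).inter ?_).inter ?_).inter ?_ <;>
          exact isOpen_lt (by fun_prop) (by fun_prop)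
      · refine ⟨⟨⟨⟨?_, ?_⟩, ?_⟩, ?_⟩, ?_⟩ <;> simp
end
end

section
/- Identify real binary quintics f = a₀x⁵ + 5a₁x⁴y + 10a₂x³y² + 10a₃x²y³ + 5a₄xy⁴ + a₅y⁵ with their coefficient vectors (a₀,…,a₅) ∈ ℝ⁶, and for each r let S_{5,r} ⊆ ℝ⁶ be the set of nonzero quintics of real rank exactly r. Then S_{5,r} has nonempty interior in ℝ⁶ if and only if r ∈ {3, 4, 5}. -/
open MvPolynomial

noncomputable section

namespace S16

def F (a : Fin 6 → ℝ) : MvPolynomial (Fin 2) ℝ :=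
  ∑ i : Fin 6, C ((Nat.choose 5 (i : ℕ) : ℝ) * a i) * X 0 ^ (5 - (i : ℕ)) * X 1 ^ (i : ℕ)

def Dec (a : Fin 6 → ℝ) (r : ℕ) : Prop :=
  ∃ c α β : Fin r → ℝ, (∀ j, (α j, β j) ≠ (0, 0)) ∧
    ∀ i : Fin 6, a i = ∑ j, c j * (α j ^ (5 - (i : ℕ)) * β j ^ (i : ℕ))

lemma F_lin (c α β : ℝ) :
    C c * lin α β ^ 5 = F (fun i => c * (α ^ (5 - (i : ℕ)) * β ^ (i : ℕ))) := by
  simp only [F, lin, Fin.sum_univ_six]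
  simp [Nat.choose]
  have h10 : (C (10 : ℝ) : MvPolynomial (Fin 2) ℝ) = 10 := map_ofNat C 10
  have h5 : (C (5 : ℝ) : MvPolynomial (Fin 2) ℝ) = 5 := map_ofNat C 5
  try rw [h10]
  try rw [h5]
  ring

lemma F_sum {r : ℕ} (b : Fin r → Fin 6 → ℝ) : ∑ j, F (b j) = F (fun i => ∑ j, b j i) := by
  simp only [F]
  rw [Finset.sum_comm]
  refine Finset.sum_congr rfl fun i _ => ?_
  rw [Finset.mul_sum, map_sum, Finset.sum_mul, Finset.sum_mul]

lemma F_inj {a b : Fin 6 → ℝ} (h : F a = F b) : a = b := by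
  have key : ∀ t : ℝ, (a 0 + 5 * a 1 * t + 10 * a 2 * t^2 + 10 * a 3 * t^3 + 5 * a 4 * t^4 + a 5 * t^5)
     = (b 0 + 5 * b 1 * t + 10 * b 2 * t^2 + 10 * b 3 * t^3 + 5 * b 4 * t^4 + b 5 * t^5) := by
    intro t
    have := congrArg (eval ![1, t]) h
    simp [F, Fin.sum_univ_six, Nat.choose] at this
    linarith
  have h0 := key 0
  have h1 := key 1
  have h2 := key (-1)
  have h3 := key 2
  have h4 := key (-2)
  have h5 := key 3
  funext i
  fin_cases i <;> simp <;> linarith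

lemma dec_iff (a : Fin 6 → ℝ) (r : ℕ) : HasDecomp (F a) 5 r ↔ Dec a r := by
  unfold HasDecomp Dec
  refine exists_congr fun c => exists_congr fun α => exists_congr fun β => and_congr_right fun _ => ?_
  simp only [F_lin]
  rw [F_sum]
  constructor
  · intro h i
    exact congrFun (F_inj h) i
  · intro h
    congr 1
    funext i
    exact h i

lemma dec_succ {a : Fin 6 → ℝ} {r : ℕ} (t : ℝ) (h : Dec a r) :
    Dec (Function.update a 0 (a 0 + t)) (r + 1) := by
  obtain ⟨c, α, β, h0, h⟩ := h
  refine ⟨Fin.cons t c, Fin.cons 1 α, Fin.cons 0 β, ?_, ?_⟩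
  · intro j
    refine Fin.cases ?_ (fun j => ?_) j
    · simp
    · simpa using h0 j
  · intro i
    rw [Fin.sum_univ_succ]
    simp only [Fin.cons_zero, Fin.cons_succ]
    rw [← h i]
    by_cases hi : i = 0
    · subst hi; simp; ring
    · have : (i : ℕ) ≠ 0 := fun h => hi (Fin.ext h)
      simp [hi, this]

lemma dec_mono {a : Fin 6 → ℝ} {r s : ℕ} (hrs : r ≤ s) (h : Dec a r) : Dec a s := by
  induction s, hrs using Nat.le_induction with
  | base => exact h
  | succ n _ ih => simpa using dec_succ 0 ih

/-- Apolarity. -/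
lemma dec_of (r : ℕ) (a : Fin 6 → ℝ) (β : Fin r → ℝ) (hβ : Function.Injective β) (g : ℕ → ℝ)
    (hr : g r ≠ 0) (hroot : ∀ j, ∑ m ∈ Finset.range (r + 1), g m * β j ^ m = 0)
    (A : ℕ → ℝ) (hA : ∀ i : Fin 6, A i = a i)
    (hap : ∀ k, k + r ≤ 5 → ∑ m ∈ Finset.range (r + 1), g m * A (k + m) = 0) : Dec a r := by
  have hdet : IsUnit (Matrix.vandermonde β).det :=
    (Matrix.det_vandermonde_ne_zero_iff.2 hβ).isUnit
  have hu : IsUnit (Matrix.vandermonde β).transpose := by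
    rw [Matrix.isUnit_iff_isUnit_det, Matrix.det_transpose]; exact hdet
  obtain ⟨c, hc⟩ := (Matrix.mulVec_surjective_iff_isUnit.2 hu) (fun i : Fin r => A i)
  have hc' : ∀ i < r, A i - ∑ j, c j * β j ^ i = 0 := by
    intro i hi
    have := congrFun hc ⟨i, hi⟩
    simp [Matrix.mulVec, dotProduct, Matrix.vandermonde_apply] at this
    rw [← this, sub_eq_zero]
    exact Finset.sum_congr rfl fun j _ => mul_comm _ _
  have hall : ∀ i, i ≤ 5 → A i - ∑ j, c j * β j ^ i = 0 := by
    intro i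
    induction i using Nat.strong_induction_on with
    | _ i ih =>
      intro hi
      by_cases hir : i < r
      · exact hc' i hir
      · obtain ⟨k, rfl⟩ : ∃ k, i = k + r := ⟨i - r, by omega⟩
        have h1 := hap k hi
        have h2 : ∑ m ∈ Finset.range (r + 1), g m * (A (k + m) - ∑ j, c j * β j ^ (k + m)) = 0 := by
          simp only [mul_sub, Finset.sum_sub_distrib]
          rw [h1, zero_sub, neg_eq_zero]
          simp only [Finset.mul_sum]
          rw [Finset.sum_comm]
          refine Finset.sum_eq_zero fun j _ => ?_
          have := hroot j
          calc _ = (c j * β j ^ k) * ∑ m ∈ Finset.range (r + 1), g m * β j ^ m := by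
                rw [Finset.mul_sum]
                refine Finset.sum_congr rfl fun m _ => ?_
                ring
            _ = 0 := by rw [this, mul_zero]
        rw [Finset.sum_range_succ, Finset.sum_eq_zero, zero_add] at h2
        · exact (mul_eq_zero.1 h2).resolve_left hr
        · intro m hm
          have hm := Finset.mem_range.1 hm
          rw [ih (k + m) (by omega) (by omega), mul_zero]
  refine ⟨c, fun _ => 1, β, by simp, fun i => ?_⟩
  have := hall i (by omega)
  rw [hA] at this
  simp
  linarith

def ext (a : Fin 6 → ℝ) : ℕ → ℝ := fun i => if h : i < 6 then a ⟨i, h⟩ else 0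

lemma dec_six (a : Fin 6 → ℝ) : Dec a 6 := by
  refine dec_of 6 a (fun j => (j : ℕ)) ?_
    (fun m => (∏ j : Fin 6, (Polynomial.X - Polynomial.C ((j : ℕ) : ℝ))).coeff m) ?_ ?_ (ext a) ?_ ?_
  · intro i j h
    simpa [Fin.ext_iff] using h
  · have := Polynomial.monic_prod_X_sub_C (fun j : Fin 6 => ((j : ℕ) : ℝ)) Finset.univ
    have h2 : (∏ j : Fin 6, (Polynomial.X - Polynomial.C ((j : ℕ) : ℝ))).natDegree = 6 := by
      rw [Polynomial.natDegree_prod_of_monic _ _ (fun i _ => Polynomial.monic_X_sub_C _)]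
      simp only [Polynomial.natDegree_X_sub_C]
      simp
    have h3 := this.coeff_natDegree
    rw [h2] at h3
    rw [h3]; norm_num
  · intro j
    have h2 : (∏ j : Fin 6, (Polynomial.X - Polynomial.C ((j : ℕ) : ℝ))).natDegree = 6 := by
      rw [Polynomial.natDegree_prod_of_monic _ _ (fun i _ => Polynomial.monic_X_sub_C _)]
      simp only [Polynomial.natDegree_X_sub_C]
      simp
    have := Polynomial.eval_eq_sum_range (p := ∏ j : Fin 6, (Polynomial.X - Polynomial.C ((j : ℕ) : ℝ))) ((j : ℕ) : ℝ)
    rw [h2] at this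
    rw [← this, Polynomial.eval_prod]
    exact Finset.prod_eq_zero (Finset.mem_univ j) (by simp)
  · intro i; simp [ext]
  · intro k hk; omega

lemma rank_dec (a : Fin 6 → ℝ) : Dec a (realRank (F a) 5) := by
  rw [← dec_iff]
  exact Nat.sInf_mem (s := {r | HasDecomp (F a) 5 r}) ⟨6, (dec_iff a 6).2 (dec_six a)⟩

lemma rank_le {a : Fin 6 → ℝ} {r : ℕ} (h : Dec a r) : realRank (F a) 5 ≤ r :=
  Nat.sInf_le ((dec_iff a r).2 h)

lemma rank_eq {a : Fin 6 → ℝ} {r : ℕ} (h : Dec a (r + 1)) (h' : ¬ Dec a r) :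
    F a ≠ 0 ∧ realRank (F a) 5 = r + 1 := by
  constructor
  · intro h0
    apply h'
    refine dec_mono (Nat.zero_le r) ((dec_iff a 0).1 ?_)
    rw [h0]
    exact ⟨fun _ => 0, fun _ => 1, fun _ => 0, by simp, by simp⟩
  · refine le_antisymm (rank_le h) ?_
    by_contra hlt
    exact h' (dec_mono (by omega) (rank_dec a))

def hank (a : Fin 6 → ℝ) : ℝ :=
  a 0 * (a 2 * a 4 - a 3 ^ 2) - a 1 * (a 1 * a 4 - a 2 * a 3) + a 2 * (a 1 * a 3 - a 2 ^ 2)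

lemma hank_zero {a : Fin 6 → ℝ} (h : Dec a 2) : hank a = 0 := by
  obtain ⟨c, α, β, -, h⟩ := h
  simp only [hank, h, Fin.sum_univ_two]
  simp
  ring

lemma line (V : Set (Fin 6 → ℝ)) (hV : IsOpen V) (a e : Fin 6 → ℝ) (ha : a ∈ V)
    (P : Polynomial ℝ) (hP : P ≠ 0) : ∃ t : ℝ, a + t • e ∈ V ∧ P.eval t ≠ 0 := by
  have hcont : Continuous fun t : ℝ => a + t • e := by fun_prop
  have hn : (fun t : ℝ => a + t • e) ⁻¹' V ∈ nhds (0 : ℝ) :=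
    (hV.preimage hcont).mem_nhds (by simpa using ha)
  have hinf := infinite_of_mem_nhds (0 : ℝ) hn
  by_contra! hcon
  refine hinf ((P.roots.toFinset.finite_toSet).subset fun t ht => ?_)
  simpa [hP] using hcon t ht

lemma ivt_up {p : ℝ → ℝ} (hp : Continuous p) {x y : ℝ} (hxy : x ≤ y) (hx : p x < 0) (hy : 0 < p y) :
    ∃ z, x < z ∧ z < y ∧ p z = 0 := by
  obtain ⟨z, hz, h⟩ := intermediate_value_Ioo hxy hp.continuousOn ⟨hx, hy⟩
  exact ⟨z, hz.1, hz.2, h⟩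

lemma ivt_down {p : ℝ → ℝ} (hp : Continuous p) {x y : ℝ} (hxy : x ≤ y) (hx : 0 < p x) (hy : p y < 0) :
    ∃ z, x < z ∧ z < y ∧ p z = 0 := by
  obtain ⟨z, hz, h⟩ := intermediate_value_Ioo' hxy hp.continuousOn ⟨hy, hx⟩
  exact ⟨z, hz.1, hz.2, h⟩

def L0 (a : Fin 6 → ℝ) : ℝ := a 4 - 2 * a 3 - a 2 + 2 * a 1
def L1 (a : Fin 6 → ℝ) : ℝ := a 5 - 2 * a 4 - a 3 + 2 * a 2

lemma dec_five {a : Fin 6 → ℝ} (h0 : L0 a ≠ 0) (h1 : L1 a ≠ 0) (h2 : L1 a - L0 a ≠ 0)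
    (h3 : L1 a - 2 * L0 a ≠ 0) (h4 : L1 a + L0 a ≠ 0) : Dec a 5 := by
  obtain ⟨t, ht⟩ : ∃ t, t = L1 a / L0 a := ⟨_, rfl⟩
  have ht' : L1 a = t * L0 a := by rw [ht]; field_simp
  have t0 : t ≠ 0 := by rintro rfl; apply h1; linarith
  have t1 : t ≠ 1 := by rintro rfl; apply h2; linarith
  have t2 : t ≠ 2 := by rintro rfl; apply h3; linarith
  have t3 : t ≠ -1 := by rintro rfl; apply h4; linarith
  have t0' := t0.symm
  have t1' := t1.symm
  have t2' := t2.symm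
  have t3' := t3.symm
  refine dec_of 5 a ![0, 1, 2, -1, t] ?_
    (fun m => if m = 0 then 0 else if m = 1 then - 2 * t else if m = 2 then 2 + t else
      if m = 3 then -1 + 2 * t else if m = 4 then -2 - t else 1) (by simp) ?_ (ext a) ?_ ?_
  · intro i j h
    fin_cases i <;> fin_cases j <;> simp at h ⊢ <;> first | (exfalso; linarith) | (exfalso; exact t0 h) | (exfalso; exact t1 h) | (exfalso; exact t2 h) | (exfalso; exact t3 h) | (exfalso; norm_num at h; done) | (exfalso; exact t0 h.symm) | (exfalso; exact t1 h.symm) | (exfalso; exact t2 h.symm) | (exfalso; exact t3 h.symm)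
  · intro j
    simp only [Finset.sum_range_succ]
    fin_cases j <;> simp <;> ring
  · intro i; simp [ext]
  · intro k hk
    obtain rfl : k = 0 := by omega
    simp only [Finset.sum_range_succ]
    simp [ext]
    unfold L0 L1 at ht'
    linarith

lemma dec_four {a : Fin 6 → ℝ} {D N1 N0 : ℝ} (hD : D = a 0 * a 2 - a 1 ^ 2)
    (hN1 : N1 = -(a 0 * (a 5 - 5 * a 3) - a 1 * (a 4 - 5 * a 2)))
    (hN0 : N0 = -(a 2 * (a 4 - 5 * a 2) - a 1 * (a 5 - 5 * a 3)))
    (p : ℝ → ℝ) (hp : p = fun x => D * (x ^ 4 - 5 * x ^ 2) + N1 * x + N0)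
    (hD0 : D ≠ 0) (h1 : 0 < p (-3)) (h2 : p (-3/2) < 0) (h3 : 0 < p 0) (h4 : p (3/2) < 0)
    (h5 : 0 < p 3) : Dec a 4 := by
  have hc : Continuous p := by rw [hp]; fun_prop
  obtain ⟨x, x1, x2, hx⟩ := ivt_down hc (by norm_num) h1 h2
  obtain ⟨y, y1, y2, hy⟩ := ivt_up hc (by norm_num) h2 h3
  obtain ⟨z, z1, z2, hz⟩ := ivt_down hc (by norm_num) h3 h4
  obtain ⟨w, w1, w2, hw⟩ := ivt_up hc (by norm_num) h4 h5
  simp only [hp] at hx hy hz hw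
  refine dec_of 4 a ![x, y, z, w] ?_
    (fun m => if m = 0 then N0 else if m = 1 then N1 else if m = 2 then - 5 * D else
      if m = 3 then 0 else D) (by simpa using hD0) ?_ (ext a) ?_ ?_
  · intro i j h
    fin_cases i <;> fin_cases j <;> simp at h ⊢ <;> linarith
  · intro j
    simp only [Finset.sum_range_succ]
    fin_cases j <;> simp <;> linarith
  · intro i; simp [ext]
  · intro k hk
    simp only [Finset.sum_range_succ]
    have : k = 0 ∨ k = 1 := by omega
    rcases this with rfl | rfl
    all_goals
      simp [ext]
      rw [hD, hN1, hN0]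
      ring

lemma dec_three {a : Fin 6 → ℝ} {D N2 N1 N0 : ℝ} (hD : D = hank a)
    (hN0 : N0 = -(a 3 * (a 2 * a 4 - a 3 ^ 2) - a 1 * (a 4 * a 4 - a 5 * a 3) + a 2 * (a 4 * a 3 - a 5 * a 2)))
    (hN1 : N1 = -(a 0 * (a 4 * a 4 - a 5 * a 3) - a 3 * (a 1 * a 4 - a 2 * a 3) + a 2 * (a 1 * a 5 - a 2 * a 4)))
    (hN2 : N2 = -(a 0 * (a 2 * a 5 - a 3 * a 4) - a 1 * (a 1 * a 5 - a 2 * a 4) + a 3 * (a 1 * a 3 - a 2 ^ 2)))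
    (p : ℝ → ℝ) (hp : p = fun x => D * x ^ 3 + N2 * x ^ 2 + N1 * x + N0)
    (hD0 : D ≠ 0) (h1 : p (-2) < 0) (h2 : 0 < p (-1/2)) (h3 : p (1/2) < 0) (h4 : 0 < p 2) :
    Dec a 3 := by
  have hc : Continuous p := by rw [hp]; fun_prop
  obtain ⟨x, x1, x2, hx⟩ := ivt_up hc (by norm_num) h1 h2
  obtain ⟨y, y1, y2, hy⟩ := ivt_down hc (by norm_num) h2 h3
  obtain ⟨z, z1, z2, hz⟩ := ivt_up hc (by norm_num) h3 h4
  simp only [hp] at hx hy hz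
  refine dec_of 3 a ![x, y, z] ?_
    (fun m => if m = 0 then N0 else if m = 1 then N1 else if m = 2 then N2 else D)
      (by simpa using hD0) ?_ (ext a) ?_ ?_
  · intro i j h
    fin_cases i <;> fin_cases j <;> simp at h ⊢ <;> linarith
  · intro j
    simp only [Finset.sum_range_succ]
    fin_cases j <;> simp <;> linarith
  · intro i; simp [ext]
  · intro k hk
    simp only [Finset.sum_range_succ]
    have : k = 0 ∨ k = 1 ∨ k = 2 := by omega
    rcases this with rfl | rfl | rfl
    all_goals
      simp [ext]
      rw [hD, hN2, hN1, hN0]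
      unfold hank
      ring

lemma abs4 {x y z w : ℝ} (hx : |x| ≤ 1) (hy : |y| ≤ 1) (hz : |z| ≤ 1) (hw : |w| ≤ 1) :
    |x * y * z * w| ≤ 1 := by
  rw [abs_mul, abs_mul, abs_mul]
  have := abs_nonneg x
  have := abs_nonneg y
  have := abs_nonneg z
  have := abs_nonneg w
  exact mul_le_one₀ (mul_le_one₀ (mul_le_one₀ hx ‹_› hy) ‹_› hz) ‹_› hw

lemma absd {d G K : ℝ} (hd : |d| ≤ 1 / 100) (hG : |G| ≤ K) : |d * G| ≤ K / 100 := by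
  rw [abs_mul]
  have := abs_nonneg G
  have := abs_nonneg d
  nlinarith

lemma normalize (x y : ℝ) (h : (x, y) ≠ (0, 0)) :
    ∃ u v : ℝ, u ^ 2 + v ^ 2 = 1 ∧ u * y = v * x := by
  have hpos : 0 < x ^ 2 + y ^ 2 := by
    by_contra hn
    apply h
    have hx : x = 0 := by nlinarith [sq_nonneg x, sq_nonneg y]
    have hy : y = 0 := by nlinarith [sq_nonneg x, sq_nonneg y]
    rw [hx, hy]
  have hs : Real.sqrt (x ^ 2 + y ^ 2) ≠ 0 := (Real.sqrt_pos.2 hpos).ne'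
  refine ⟨x / Real.sqrt (x ^ 2 + y ^ 2), y / Real.sqrt (x ^ 2 + y ^ 2), ?_, by ring⟩
  rw [div_pow, div_pow, Real.sq_sqrt hpos.le]
  field_simp

lemma not_dec_four {a : Fin 6 → ℝ} (h0 : |a 0 - 1| ≤ 1 / 100) (h1 : |a 1| ≤ 1 / 100)
    (h2 : |a 2 + 1| ≤ 1 / 100) (h3 : |a 3| ≤ 1 / 100) (h4 : |a 4 - 1| ≤ 1 / 100)
    (h5 : |a 5| ≤ 1 / 100) : ¬ Dec a 4 := by
  rintro ⟨c, α, β, hnz, h⟩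
  choose u v hn hk using fun j => normalize (α j) (β j) (hnz j)
  have hu : ∀ j, |u j| ≤ 1 := fun j => abs_le_one_iff_mul_self_le_one.2 (by nlinarith [hn j, sq_nonneg (v j)])
  have hv : ∀ j, |v j| ≤ 1 := fun j => abs_le_one_iff_mul_self_le_one.2 (by nlinarith [hn j, sq_nonneg (u j)])
  obtain ⟨G0, e0⟩ : ∃ x, x = v 0 * v 1 * v 2 * v 3 := ⟨_, rfl⟩
  obtain ⟨G1, e1⟩ : ∃ x, x = -(u 0 * v 1 * v 2 * v 3 + v 0 * u 1 * v 2 * v 3 + v 0 * v 1 * u 2 * v 3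
    + v 0 * v 1 * v 2 * u 3) := ⟨_, rfl⟩
  obtain ⟨G2, e2⟩ : ∃ x, x = u 0 * u 1 * v 2 * v 3 + u 0 * v 1 * u 2 * v 3 + u 0 * v 1 * v 2 * u 3
    + v 0 * u 1 * u 2 * v 3 + v 0 * u 1 * v 2 * u 3 + v 0 * v 1 * u 2 * u 3 := ⟨_, rfl⟩
  obtain ⟨G3, e3⟩ : ∃ x, x = -(v 0 * u 1 * u 2 * u 3 + u 0 * v 1 * u 2 * u 3 + u 0 * u 1 * v 2 * u 3
    + u 0 * u 1 * u 2 * v 3) := ⟨_, rfl⟩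
  obtain ⟨G4, e4⟩ : ∃ x, x = u 0 * u 1 * u 2 * u 3 := ⟨_, rfl⟩
  have hG : ∀ j, G0 * α j ^ 4 + G1 * α j ^ 3 * β j + G2 * α j ^ 2 * β j ^ 2 + G3 * α j * β j ^ 3
      + G4 * β j ^ 4 = 0 := by
    intro j
    have : G0 * α j ^ 4 + G1 * α j ^ 3 * β j + G2 * α j ^ 2 * β j ^ 2 + G3 * α j * β j ^ 3
      + G4 * β j ^ 4 = ∏ k : Fin 4, (u k * β j - v k * α j) := by
      rw [Fin.prod_univ_four, e0, e1, e2, e3, e4]; ring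
    rw [this]
    exact Finset.prod_eq_zero (Finset.mem_univ j) (by rw [hk j]; ring)
  have hA : G0 * a 0 + G1 * a 1 + G2 * a 2 + G3 * a 3 + G4 * a 4 = 0 := by
    simp only [h, Finset.mul_sum, ← Finset.sum_add_distrib]
    refine Finset.sum_eq_zero fun j _ => ?_
    have := hG j
    simp
    linear_combination (c j * α j) * this
  have hB : G0 * a 1 + G1 * a 2 + G2 * a 3 + G3 * a 4 + G4 * a 5 = 0 := by
    simp only [h, Finset.mul_sum, ← Finset.sum_add_distrib]
    refine Finset.sum_eq_zero fun j _ => ?_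
    have := hG j
    simp
    linear_combination (c j * β j) * this
  have hsq : (G0 - G2 + G4) ^ 2 + (G3 - G1) ^ 2 = 1 := by
    have : (G0 - G2 + G4) ^ 2 + (G3 - G1) ^ 2 = (u 0 ^ 2 + v 0 ^ 2) * (u 1 ^ 2 + v 1 ^ 2) *
        (u 2 ^ 2 + v 2 ^ 2) * (u 3 ^ 2 + v 3 ^ 2) := by
      rw [e0, e1, e2, e3, e4]; ring
    rw [this]; simp [hn]
  have b0 : |G0| ≤ 1 := by rw [e0]; exact abs4 (hv _) (hv _) (hv _) (hv _)
  have b4 : |G4| ≤ 1 := by rw [e4]; exact abs4 (hu _) (hu _) (hu _) (hu _)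
  have b1 : |G1| ≤ 4 := by
    have p1 := abs_le.1 (abs4 (hu 0) (hv 1) (hv 2) (hv 3))
    have p2 := abs_le.1 (abs4 (hv 0) (hu 1) (hv 2) (hv 3))
    have p3 := abs_le.1 (abs4 (hv 0) (hv 1) (hu 2) (hv 3))
    have p4 := abs_le.1 (abs4 (hv 0) (hv 1) (hv 2) (hu 3))
    rw [e1, abs_le]; constructor <;> linarith
  have b3 : |G3| ≤ 4 := by
    have p1 := abs_le.1 (abs4 (hv 0) (hu 1) (hu 2) (hu 3))
    have p2 := abs_le.1 (abs4 (hu 0) (hv 1) (hu 2) (hu 3))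
    have p3 := abs_le.1 (abs4 (hu 0) (hu 1) (hv 2) (hu 3))
    have p4 := abs_le.1 (abs4 (hu 0) (hu 1) (hu 2) (hv 3))
    rw [e3, abs_le]; constructor <;> linarith
  have b2 : |G2| ≤ 6 := by
    have p1 := abs_le.1 (abs4 (hu 0) (hu 1) (hv 2) (hv 3))
    have p2 := abs_le.1 (abs4 (hu 0) (hv 1) (hu 2) (hv 3))
    have p3 := abs_le.1 (abs4 (hu 0) (hv 1) (hv 2) (hu 3))
    have p4 := abs_le.1 (abs4 (hv 0) (hu 1) (hu 2) (hv 3))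
    have p5 := abs_le.1 (abs4 (hv 0) (hu 1) (hv 2) (hu 3))
    have p6 := abs_le.1 (abs4 (hv 0) (hv 1) (hu 2) (hu 3))
    rw [e2, abs_le]; constructor <;> linarith
  have cA : |G0 - G2 + G4| ≤ 1 / 2 := by
    have q0 := abs_le.1 (absd h0 b0)
    have q1 := abs_le.1 (absd h1 b1)
    have q2 := abs_le.1 (absd h2 b2)
    have q3 := abs_le.1 (absd h3 b3)
    have q4 := abs_le.1 (absd h4 b4)
    rw [abs_le]; constructor <;> linarith
  have cB : |G3 - G1| ≤ 1 / 2 := by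
    have q0 := abs_le.1 (absd h1 b0)
    have q1 := abs_le.1 (absd h2 b1)
    have q2 := abs_le.1 (absd h3 b2)
    have q3 := abs_le.1 (absd h4 b3)
    have q4 := abs_le.1 (absd h5 b4)
    rw [abs_le]; constructor <;> linarith
  have d1 := sq_le_sq' (abs_le.1 cA).1 (abs_le.1 cA).2
  have d2 := sq_le_sq' (abs_le.1 cB).1 (abs_le.1 cB).2
  linarith

lemma not_dec_three {a : Fin 6 → ℝ} (h1 : |a 1| ≤ 1 / 100)
    (h2 : |a 2 + 1| ≤ 1 / 100) (h3 : |a 3| ≤ 1 / 100) (h4 : |a 4 - 1| ≤ 1 / 100)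
    (h5 : |a 5| ≤ 1 / 100) : ¬ Dec a 3 := by
  intro h
  refine not_dec_four ?_ ?_ ?_ ?_ ?_ ?_ (dec_succ (1 - a 0) h)
  · simp
  all_goals simp [Function.update] at *; assumption

lemma ev {f : (Fin 6 → ℝ) → ℝ} (hf : Continuous f) (a : Fin 6 → ℝ) (h : 0 < f a) :
    ∀ᶠ x in nhds a, 0 < f x :=
  (isOpen_lt continuous_const hf).mem_nhds h

lemma evn {f : (Fin 6 → ℝ) → ℝ} (hf : Continuous f) (a : Fin 6 → ℝ) (h : f a < 0) :
    ∀ᶠ x in nhds a, f x < 0 :=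
  (isOpen_lt hf continuous_const).mem_nhds h

lemma eva {f : (Fin 6 → ℝ) → ℝ} (hf : Continuous f) (a : Fin 6 → ℝ) (h : f a = 0) :
    ∀ᶠ x in nhds a, |f x| ≤ 1 / 100 := by
  have : ∀ᶠ x in nhds a, |f x| < 1 / 100 :=
    (isOpen_lt hf.abs continuous_const).mem_nhds (by simp [h])
  exact this.mono fun x hx => hx.le

lemma evne {f : (Fin 6 → ℝ) → ℝ} (hf : Continuous f) (a : Fin 6 → ℝ) (h : f a ≠ 0) :
    ∀ᶠ x in nhds a, f x ≠ 0 :=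
  (isOpen_ne_fun hf continuous_const).mem_nhds h

lemma five : ∀ᶠ a in nhds (![1, 0, -1, 0, 1, 0] : Fin 6 → ℝ), Dec a 5 ∧ ¬ Dec a 4 := by
  have c0 : Continuous L0 := by unfold L0; fun_prop
  have c1 : Continuous L1 := by unfold L1; fun_prop
  filter_upwards [eva (f := fun a => a 0 - 1) (by fun_prop) _ (by simp),
    eva (f := fun a => a 1) (by fun_prop) _ (by simp),
    eva (f := fun a => a 2 + 1) (by fun_prop) _ (by simp),
    eva (f := fun a => a 3) (by fun_prop) _ (by simp),
    eva (f := fun a => a 4 - 1) (by fun_prop) _ (by simp),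
    eva (f := fun a => a 5) (by fun_prop) _ (by simp),
    evne c0 _ (by simp [L0]; try norm_num),
    evne c1 _ (by simp [L1]; try norm_num),
    evne (c1.sub c0) _ (by simp [L1, L0]; try norm_num),
    evne (c1.sub (c0.const_mul 2)) _ (by simp [L1, L0]; try norm_num),
    evne (c1.add c0) _ (by simp [L1, L0]; try norm_num)] with a h0 h1 h2 h3 h4 h5 k0 k1 k2 k3 k4
  exact ⟨dec_five k0 k1 k2 k3 k4, not_dec_four h0 h1 h2 h3 h4 h5⟩

lemma four : ∀ᶠ a in nhds (![-3/2, 0, -1, 0, 1, 0] : Fin 6 → ℝ), Dec a 4 ∧ ¬ Dec a 3 := by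
  let D : (Fin 6 → ℝ) → ℝ := fun a => a 0 * a 2 - a 1 ^ 2
  let N1 : (Fin 6 → ℝ) → ℝ := fun a => -(a 0 * (a 5 - 5 * a 3) - a 1 * (a 4 - 5 * a 2))
  let N0 : (Fin 6 → ℝ) → ℝ := fun a => -(a 2 * (a 4 - 5 * a 2) - a 1 * (a 5 - 5 * a 3))
  let p : (Fin 6 → ℝ) → ℝ → ℝ := fun a x => D a * (x ^ 4 - 5 * x ^ 2) + N1 a * x + N0 a
  have hp : ∀ x, Continuous fun a => p a x := fun x => by simp only [p, D, N1, N0]; fun_prop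
  have hD : Continuous D := by simp only [D]; fun_prop
  filter_upwards [eva (f := fun a => a 1) (by fun_prop) _ (by simp),
    eva (f := fun a => a 2 + 1) (by fun_prop) _ (by simp),
    eva (f := fun a => a 3) (by fun_prop) _ (by simp),
    eva (f := fun a => a 4 - 1) (by fun_prop) _ (by simp),
    eva (f := fun a => a 5) (by fun_prop) _ (by simp),
    evne hD _ (by simp [D]),
    ev (hp (-3)) _ (by simp [p, D, N1, N0]; norm_num),
    evn (hp (-3/2)) _ (by simp [p, D, N1, N0]; norm_num),
    ev (hp 0) _ (by simp [p, D, N1, N0]; try norm_num),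
    evn (hp (3/2)) _ (by simp [p, D, N1, N0]; norm_num),
    ev (hp 3) _ (by simp [p, D, N1, N0]; norm_num)] with a h1 h2 h3 h4 h5 k0 k1 k2 k3 k4 k5
  exact ⟨dec_four rfl rfl rfl (p a) rfl k0 k1 k2 k3 k4 k5, not_dec_three h1 h2 h3 h4 h5⟩

lemma three : ∀ᶠ a in nhds (![3, 0, 2, 0, 2, 0] : Fin 6 → ℝ), Dec a 3 ∧ ¬ Dec a 2 := by
  let N0 : (Fin 6 → ℝ) → ℝ := fun a =>
    -(a 3 * (a 2 * a 4 - a 3 ^ 2) - a 1 * (a 4 * a 4 - a 5 * a 3) + a 2 * (a 4 * a 3 - a 5 * a 2))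
  let N1 : (Fin 6 → ℝ) → ℝ := fun a =>
    -(a 0 * (a 4 * a 4 - a 5 * a 3) - a 3 * (a 1 * a 4 - a 2 * a 3) + a 2 * (a 1 * a 5 - a 2 * a 4))
  let N2 : (Fin 6 → ℝ) → ℝ := fun a =>
    -(a 0 * (a 2 * a 5 - a 3 * a 4) - a 1 * (a 1 * a 5 - a 2 * a 4) + a 3 * (a 1 * a 3 - a 2 ^ 2))
  let p : (Fin 6 → ℝ) → ℝ → ℝ := fun a x => hank a * x ^ 3 + N2 a * x ^ 2 + N1 a * x + N0 a
  have hp : ∀ x, Continuous fun a => p a x := fun x => by simp only [p, hank, N2, N1, N0]; fun_prop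
  have hD : Continuous hank := by unfold hank; fun_prop
  filter_upwards [
    evne hD _ (by simp [hank]; try norm_num),
    evn (hp (-2)) _ (by simp [p, hank, N2, N1, N0]; norm_num),
    ev (hp (-1/2)) _ (by simp [p, hank, N2, N1, N0]; norm_num),
    evn (hp (1/2)) _ (by simp [p, hank, N2, N1, N0]; norm_num),
    ev (hp 2) _ (by simp [p, hank, N2, N1, N0]; norm_num)] with a k0 k1 k2 k3 k4
  exact ⟨dec_three rfl rfl rfl rfl (p a) rfl k0 k1 k2 k3 k4, fun h => k0 (hank_zero h)⟩

lemma ex_hank (V : Set (Fin 6 → ℝ)) (hV : IsOpen V) (a : Fin 6 → ℝ) (ha : a ∈ V) :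
    ∃ b ∈ V, hank b ≠ 0 := by
  let P : Polynomial ℝ :=
    Polynomial.C (a 0) * ((Polynomial.C (a 2) + Polynomial.X) * Polynomial.C (a 4) - Polynomial.C (a 3) ^ 2)
     - Polynomial.C (a 1) * (Polynomial.C (a 1) * Polynomial.C (a 4) - (Polynomial.C (a 2) + Polynomial.X) * Polynomial.C (a 3))
     + (Polynomial.C (a 2) + Polynomial.X) * (Polynomial.C (a 1) * Polynomial.C (a 3) - (Polynomial.C (a 2) + Polynomial.X) ^ 2)
  have hev : ∀ t, P.eval t = hank (a + t • ![0, 0, 1, 0, 0, 0]) := by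
    intro t; simp [P, hank]
  have hP : P ≠ 0 := by
    intro h0
    have key : ∀ t : ℝ, a 0 * ((a 2 + t) * a 4 - a 3 ^ 2) - a 1 * (a 1 * a 4 - (a 2 + t) * a 3)
        + (a 2 + t) * (a 1 * a 3 - (a 2 + t) ^ 2) = 0 := by
      intro t
      have := congrArg (Polynomial.eval t) h0
      simpa [P] using this
    have h1 := key 0
    have h2 := key 1
    have h3 := key 2
    have h4 := key 3
    linarith
  obtain ⟨t, ht, h⟩ := line V hV a ![0, 0, 1, 0, 0, 0] ha P hP
  exact ⟨_, ht, by rwa [← hev]⟩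

lemma ex_five (V : Set (Fin 6 → ℝ)) (hV : IsOpen V) (a : Fin 6 → ℝ) (ha : a ∈ V) :
    ∃ b ∈ V, Dec b 5 := by
  have hne : ∀ x y : ℝ, y ≠ 0 → (Polynomial.C x + Polynomial.C y * Polynomial.X : Polynomial ℝ) ≠ 0 := by
    intro x y hy h
    have := congrArg (fun p => Polynomial.coeff p 1) h
    simp [Polynomial.coeff_C] at this
    exact hy this
  obtain ⟨t, ht, h⟩ := line V hV a ![1, 0, -1, 0, 1, 0] ha
    ((Polynomial.C (L0 a) + Polynomial.C 2 * Polynomial.X) * (Polynomial.C (L1 a) + Polynomial.C (-4) * Polynomial.X) * (Polynomial.C (L1 a - L0 a) + Polynomial.C (-6) * Polynomial.X) *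
      (Polynomial.C (L1 a - 2 * L0 a) + Polynomial.C (-8) * Polynomial.X) * (Polynomial.C (L1 a + L0 a) + Polynomial.C (-2) * Polynomial.X))
    (mul_ne_zero (mul_ne_zero (mul_ne_zero (mul_ne_zero (hne _ _ (by norm_num)) (hne _ _ (by norm_num)))
      (hne _ _ (by norm_num))) (hne _ _ (by norm_num))) (hne _ _ (by norm_num)))
  have e0 : L0 (a + t • ![1, 0, -1, 0, 1, 0]) = L0 a + 2 * t := by simp [L0]; ring
  have e1 : L1 (a + t • ![1, 0, -1, 0, 1, 0]) = L1 a - 4 * t := by simp [L1]; ring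
  simp only [Polynomial.eval_mul, Polynomial.eval_add, Polynomial.eval_C, Polynomial.eval_X,
    mul_ne_zero_iff] at h
  obtain ⟨⟨⟨⟨k0, k1⟩, k2⟩, k3⟩, k4⟩ := h
  refine ⟨_, ht, dec_five ?_ ?_ ?_ ?_ ?_⟩
  · rw [e0]; exact k0
  · rw [e1]; contrapose! k1; linarith
  · rw [e0, e1]; contrapose! k2; linarith
  · rw [e0, e1]; contrapose! k3; linarith
  · rw [e0, e1]; contrapose! k4; linarith

lemma main (Q : (Fin 6 → ℝ) → Prop) (hQ : ∀ a, F a ≠ 0 → Q a) (r : ℕ) :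
    (interior {a : Fin 6 → ℝ | Q a ∧ realRank (F a) 5 = r}).Nonempty ↔
      r = 3 ∨ r = 4 ∨ r = 5 := by
  constructor
  · rintro ⟨a, ha⟩
    obtain ⟨b, hb, hb'⟩ := ex_hank _ isOpen_interior a ha
    obtain ⟨b2, hb2, hb2'⟩ := ex_five _ isOpen_interior a ha
    have h1 := (interior_subset hb).2
    have h2 := (interior_subset hb2).2
    have h3 : r ≤ 5 := h2 ▸ rank_le hb2'
    have h4 : ¬ r ≤ 2 := fun h => hb' (hank_zero (dec_mono h (h1 ▸ rank_dec b)))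
    omega
  · have hr : ∀ {a : Fin 6 → ℝ} {r : ℕ}, Dec a (r + 1) → ¬ Dec a r →
        Q a ∧ realRank (F a) 5 = r + 1 := fun h h' => ⟨hQ _ (rank_eq h h').1, (rank_eq h h').2⟩
    rintro (rfl | rfl | rfl)
    · exact ⟨_, mem_interior_iff_mem_nhds.2 (three.mono fun a h => hr h.1 h.2)⟩
    · exact ⟨_, mem_interior_iff_mem_nhds.2 (four.mono fun a h => hr h.1 h.2)⟩
    · exact ⟨_, mem_interior_iff_mem_nhds.2 (five.mono fun a h => hr h.1 h.2)⟩

end S16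

/-- identifying real binary quintics with coefficient vectors in `ℝ⁶`,
the set of quintics of real rank exactly `r` has nonempty interior iff `r ∈ {3,4,5}`. -/
theorem stmt16 (r : ℕ) :
    (interior {a : Fin 6 → ℝ |
        (∑ i : Fin 6, C ((Nat.choose 5 (i : ℕ) : ℝ) * a i) *
          X 0 ^ (5 - (i : ℕ)) * X 1 ^ (i : ℕ)) ≠ 0 ∧
        realRank (∑ i : Fin 6, C ((Nat.choose 5 (i : ℕ) : ℝ) * a i) *
          X 0 ^ (5 - (i : ℕ)) * X 1 ^ (i : ℕ)) 5 = r}).Nonempty ↔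
      r = 3 ∨ r = 4 ∨ r = 5 := by
  refine S16.main (fun a => (∑ i : Fin 6, C ((Nat.choose 5 (i : ℕ) : ℝ) * a i) *
          X 0 ^ (5 - (i : ℕ)) * X 1 ^ (i : ℕ) : MvPolynomial ℕ ℝ) ≠ 0) (fun a ha h0 => ha ?_) r
  have := congrArg (MvPolynomial.aeval (fun n : ℕ => if n = 0 then (X 0 : MvPolynomial (Fin 2) ℝ) else X 1)) h0
  rw [map_zero, map_sum] at this
  rw [S16.F, ← this]
  refine Finset.sum_congr rfl fun i _ => Eq.symm ?_
  rw [map_mul, map_mul, map_pow, map_pow, aeval_C, aeval_X, aeval_X, MvPolynomial.algebraMap_eq,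
    if_pos rfl, if_neg one_ne_zero]
end
end
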